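/- Let a and b be distinct positive integers and let Λ = (λ_n)_{n≥1} be a sequence of positive integers. Let α_Λ = [0; ā^{λ₁}, b̄^{λ₂}, ā^{λ₃}, …, b̄^{λ_{2n}}, ā^{λ_{2n+1}}, …] be the continued fraction whose sequence of partial quotients consists of λ₁ copies of a, followed by λ₂ copies of b, followed by λ₃ copies of a, and so on alternately. If liminf_{n→∞} λ_{n+1}/λ_n > √2, then α_Λ is transcendental. -/

import Mathlib

/-- Numerators of the convergents of `[0; t 1, t 2, ...]`. -/
def cfNum (t : ℕ → ℕ) : ℕ → ℕ
  | 0 => 0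
  | 1 => 1
  | n + 2 => t (n + 2) * cfNum t (n + 1) + cfNum t n

/-- Denominators of the convergents of `[0; t 1, t 2, ...]`. -/
def cfDen (t : ℕ → ℕ) : ℕ → ℕ
  | 0 => 1
  | 1 => t 1
  | n + 2 => t (n + 2) * cfDen t (n + 1) + cfDen t n

section
namespace RothCF
open MvPolynomial

section HasseD
variable {σ : Type*} {R : Type*} [CommRing R]

/-- Taylor map `f(X) ↦ f(X+Y)`. -/
noncomputable def tay : MvPolynomial σ R →ₐ[R] MvPolynomial σ (MvPolynomial σ R) :=
  aeval (fun j => C (X j) + X j)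

/-- Hasse derivatives. -/
noncomputable def hD (i : σ →₀ ℕ) : MvPolynomial σ R →ₗ[R] MvPolynomial σ R where
  toFun f := coeff i (tay f)
  map_add' f g := by simp
  map_smul' c f := by simp [coeff_smul]

/-- Translation. -/
noncomputable def shift (x : σ → R) : MvPolynomial σ R →ₐ[R] MvPolynomial σ R :=
  aeval (fun j => X j + C (x j))

lemma hD_apply (i : σ →₀ ℕ) (f : MvPolynomial σ R) : hD i f = coeff i (tay f) := rfl

lemma hD_mul [DecidableEq σ] (i : σ →₀ ℕ) (f g : MvPolynomial σ R) :
    hD i (f * g) = ∑ p ∈ Finset.HasAntidiagonal.antidiagonal i, hD p.1 f * hD p.2 g := by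
  simp only [hD_apply, map_mul, coeff_mul]

lemma tay_shift (x : σ → R) (f : MvPolynomial σ R) :
    tay (shift x f) = MvPolynomial.map (shift x : MvPolynomial σ R →+* MvPolynomial σ R) (tay f) := by
  have : (tay.toRingHom).comp (shift x).toRingHom =
    (MvPolynomial.map (shift x : MvPolynomial σ R →+* MvPolynomial σ R)).comp (tay (σ := σ) (R := R)).toRingHom := by
    apply MvPolynomial.ringHom_ext
    · intro r
      simp [tay, shift, MvPolynomial.algebraMap_eq, MvPolynomial.algebraMap_apply]
    · intro j
      simp [tay, shift, MvPolynomial.algebraMap_eq, MvPolynomial.algebraMap_apply]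
      ring
  exact congrArg (fun h => h f) this

lemma shift_hD (x : σ → R) (i : σ →₀ ℕ) (f : MvPolynomial σ R) :
    shift x (hD i f) = hD i (shift x f) := by
  rw [hD_apply, hD_apply, tay_shift, coeff_map]; rfl

lemma coeff_shift (x : σ → R) (i : σ →₀ ℕ) (f : MvPolynomial σ R) :
    coeff i (shift x f) = eval x (hD i f) := by
  have : (shift x).toRingHom = (MvPolynomial.map (eval x)).comp (tay (σ := σ) (R := R)).toRingHom := by
    apply MvPolynomial.ringHom_ext
    · intro r
      simp [tay, shift, MvPolynomial.algebraMap_eq, MvPolynomial.algebraMap_apply]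
    · intro j
      simp [tay, shift, MvPolynomial.algebraMap_eq, MvPolynomial.algebraMap_apply]
      ring
  have h2 : shift x f = MvPolynomial.map (eval x) (tay f) := congrArg (fun h => h f) this
  rw [h2, coeff_map]; rfl

lemma map_hD {S : Type*} [CommRing S] (φ : R →+* S) (i : σ →₀ ℕ) (f : MvPolynomial σ R) :
    MvPolynomial.map φ (hD i f) = hD i (MvPolynomial.map φ f) := by
  have : (MvPolynomial.map (MvPolynomial.map φ)).comp (tay (σ := σ) (R := R)).toRingHom =
     (tay (σ := σ) (R := S)).toRingHom.comp (MvPolynomial.map φ) := by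
    apply MvPolynomial.ringHom_ext
    · intro r
      simp [tay, MvPolynomial.algebraMap_eq, MvPolynomial.algebraMap_apply]
    · intro j
      simp [tay, MvPolynomial.algebraMap_eq, MvPolynomial.algebraMap_apply]
  have h2 : MvPolynomial.map (MvPolynomial.map φ) (tay f) = tay (MvPolynomial.map φ f) :=
    congrArg (fun h => h f) this
  rw [hD_apply, hD_apply, ← h2, coeff_map]

/-- product of binomial coefficients -/
def bin [Fintype σ] (e i : σ →₀ ℕ) : ℕ := ∏ j, (e j + i j).choose (i j)

lemma hD_mul_X [DecidableEq σ] (i : σ →₀ ℕ) (f : MvPolynomial σ R) (j : σ) :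
    hD i (f * X j) = hD i f * X j + if j ∈ i.support then hD (i - Finsupp.single j 1) f else 0 := by
  have : tay (X j : MvPolynomial σ R) = C (X j) + X j := by simp [tay]
  rw [hD_apply, map_mul, this, mul_add, coeff_add, mul_comm _ (C _), coeff_C_mul, coeff_mul_X',
    mul_comm]
  rfl

lemma coeff_hD [Fintype σ] (f : MvPolynomial σ R) (e i : σ →₀ ℕ) :
    coeff e (hD i f) = (bin e i : R) * coeff (e + i) f := by
  classical
  induction f using MvPolynomial.induction_on generalizing e i with
  | C r =>
    have : tay (C r : MvPolynomial σ R) = C (C r) := by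
      simp [tay, MvPolynomial.algebraMap_apply]
    rw [hD_apply, this, coeff_C, coeff_C]
    by_cases hi : i = 0
    · subst hi
      by_cases he : e = 0
      · subst he; simp [bin]
      · rw [if_pos rfl, coeff_C, if_neg (Ne.symm he), if_neg]; · simp
        simpa using Ne.symm he
    · rw [if_neg (Ne.symm hi), if_neg]; · simp
      intro h
      apply hi
      ext j
      have := congrArg (fun g => g j) h
      simp at this ⊢
      omega
  | add p q hp hq => simp [hp, hq, mul_add]
  | mul_X p j hp =>
    rw [hD_mul_X, coeff_add, coeff_mul_X', coeff_mul_X']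
    have key : ∀ (e' i' : σ →₀ ℕ), bin e' i' =
        (e' j + i' j).choose (i' j) * ∏ k ∈ Finset.univ.erase j, (e' k + i' k).choose (i' k) := by
      intro e' i'
      rw [bin, Finset.mul_prod_erase _ (fun k => (e' k + i' k).choose (i' k)) (Finset.mem_univ j)]
    have hother : ∀ (e' i' : σ →₀ ℕ), (∀ k, k ≠ j → e' k = e k) → (∀ k, k ≠ j → i' k = i k) →
       ∏ k ∈ Finset.univ.erase j, (e' k + i' k).choose (i' k) =
       ∏ k ∈ Finset.univ.erase j, (e k + i k).choose (i k) := by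
      intro e' i' h1 h2
      apply Finset.prod_congr rfl
      intro k hk
      rw [h1 k (Finset.ne_of_mem_erase hk), h2 k (Finset.ne_of_mem_erase hk)]
    have hsub : ∀ (u : σ →₀ ℕ) (k : σ), k ≠ j → (u - (Finsupp.single j 1 : σ →₀ ℕ)) k = u k := by
      intro u k hk
      simp [Finsupp.single_apply, Ne.symm hk]
    have hsj : ∀ (u : σ →₀ ℕ), (u - (Finsupp.single j 1 : σ →₀ ℕ)) j = u j - 1 := by
      intro u; simp
    by_cases h1 : j ∈ e.support <;> by_cases h2 : j ∈ i.support
    · have h3 : j ∈ (e + i).support := by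
        simp at h1 h2 ⊢; omega
      rw [if_pos h1, if_pos h2, if_pos h3, hp, hp]
      have e1 : e - Finsupp.single j 1 + i = e + i - Finsupp.single j 1 := by
        ext k; by_cases hk : k = j
        · subst hk; simp at h1 h2 ⊢; omega
        · have hz : (Finsupp.single j 1 : σ →₀ ℕ) k = 0 := by simp [Finsupp.single_apply, Ne.symm hk]
          simp [hz]
      have e2 : e + (i - Finsupp.single j 1) = e + i - Finsupp.single j 1 := by
        ext k; by_cases hk : k = j
        · subst hk; simp at h1 h2 ⊢; omega
        · have hz : (Finsupp.single j 1 : σ →₀ ℕ) k = 0 := by simp [Finsupp.single_apply, Ne.symm hk]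
          simp [hz]
      rw [e1, e2, ← add_mul]
      congr 1
      rw [key e i, key (e - _) i, key e (i - _), hother _ _ (hsub e) (fun _ _ => rfl),
        hother _ _ (fun _ _ => rfl) (hsub i), hsj, hsj, ← Nat.cast_add, ← add_mul]
      congr 2
      simp at h1 h2
      obtain ⟨u, hu⟩ := Nat.exists_eq_succ_of_ne_zero h1
      obtain ⟨v, hv⟩ := Nat.exists_eq_succ_of_ne_zero h2
      rw [hu, hv]
      simp only [Nat.succ_eq_add_one, Nat.add_sub_cancel]
      rw [show u + 1 + (v + 1) = (u + v + 1) + 1 by ring, Nat.choose_succ_succ, 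
        show u + (v+1) = u + v + 1 by ring, show u + 1 + v = u + v + 1 by ring]
      ring
    · have h3 : j ∈ (e + i).support := by
        simp at h1 h2 ⊢; omega
      rw [if_pos h1, if_neg h2, if_pos h3, hp]
      have e1 : e - Finsupp.single j 1 + i = e + i - Finsupp.single j 1 := by
        ext k; by_cases hk : k = j
        · subst hk; simp at h1 h2 ⊢; omega
        · have hz : (Finsupp.single j 1 : σ →₀ ℕ) k = 0 := by simp [Finsupp.single_apply, Ne.symm hk]
          simp [hz]
      rw [e1, coeff_zero, add_zero]
      congr 2
      rw [key e i, key (e - _) i, hother _ _ (hsub e) (fun _ _ => rfl)]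
      simp at h2
      simp [h2]
    · have h3 : j ∈ (e + i).support := by
        simp at h1 h2 ⊢; omega
      rw [if_neg h1, if_pos h2, if_pos h3, hp]
      have e2 : e + (i - Finsupp.single j 1) = e + i - Finsupp.single j 1 := by
        ext k; by_cases hk : k = j
        · subst hk; simp at h1 h2 ⊢; omega
        · have hz : (Finsupp.single j 1 : σ →₀ ℕ) k = 0 := by simp [Finsupp.single_apply, Ne.symm hk]
          simp [hz]
      rw [e2, zero_add]
      congr 2
      rw [key e i, key e (i - _), hother _ _ (fun _ _ => rfl) (hsub i)]
      simp at h1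
      simp [h1]
    · have h3 : j ∉ (e + i).support := by
        simp at h1 h2 ⊢; omega
      rw [if_neg h1, if_neg h2, if_neg h3]; simp

lemma pderiv_hD [Fintype σ] (f : MvPolynomial σ R) (i : σ →₀ ℕ) (j : σ) :
    pderiv j (hD i f) = ((i j + 1 : ℕ) : MvPolynomial σ R) * hD (i + Finsupp.single j 1) f := by
  classical
  ext e
  rw [coeff_pderiv, coeff_hD, ← C_eq_coe_nat, coeff_C_mul, coeff_hD,
    show e + Finsupp.single j 1 + i = e + (i + Finsupp.single j 1) by abel]
  have key : bin (e + Finsupp.single j 1) i * (e j + 1) = (i j + 1) * bin e (i + Finsupp.single j 1) := by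
    have h1 : ∀ k, k ≠ j → (Finsupp.single j 1 : σ →₀ ℕ) k = 0 := by
      intro k hk; simp [Finsupp.single_apply, Ne.symm hk]
    rw [bin, bin, ← Finset.mul_prod_erase _ _ (Finset.mem_univ j),
      ← Finset.mul_prod_erase (a := j) _ (fun k => (e k + (i + (Finsupp.single j 1 : σ →₀ ℕ)) k).choose ((i + (Finsupp.single j 1 : σ →₀ ℕ)) k)) (Finset.mem_univ j)]
    have : ∏ x ∈ Finset.univ.erase j, ((e + (Finsupp.single j 1 : σ →₀ ℕ)) x + i x).choose (i x) =
      ∏ x ∈ Finset.univ.erase j, (e x + (i + (Finsupp.single j 1 : σ →₀ ℕ)) x).choose ((i + (Finsupp.single j 1 : σ →₀ ℕ)) x) := by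
      apply Finset.prod_congr rfl
      intro k hk
      have := h1 k (Finset.ne_of_mem_erase hk)
      simp [this]
    rw [this, ← mul_assoc, mul_right_comm]
    congr 1
    simp only [Finsupp.add_apply, Finsupp.single_eq_same]
    have := Nat.choose_succ_right_eq (e j + 1 + i j) (i j)
    rw [show e j + 1 + i j - i j = e j + 1 by omega] at this
    rw [← this, show e j + (i j + 1) = e j + 1 + i j by ring]
    ring
  have := congrArg (Nat.cast (R := R)) key
  push_cast at this ⊢
  linear_combination (coeff (e + (i + Finsupp.single j 1)) f) * this

lemma hD_zero (f : MvPolynomial σ R) [Fintype σ] : hD 0 f = f := by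
  ext e
  simp [coeff_hD, bin]

end HasseD
end RothCF
end

section
namespace RothCF
open MvPolynomial

lemma coeff_X_mul_pderiv {n : ℕ} (f : MvPolynomial (Fin n) ℚ) (j : Fin n) (e : Fin n →₀ ℕ) :
    coeff e (X j * pderiv j f) = (e j : ℚ) * coeff e f := by
  rw [coeff_X_mul']
  split_ifs with h
  · rw [coeff_pderiv]
    have h0 : e j ≠ 0 := by simpa using h
    have : e - Finsupp.single j 1 + Finsupp.single j 1 = e := by
      ext k
      by_cases hk : k = j
      · subst hk; simp; omega
      · have hz : (Finsupp.single j 1 : Fin n →₀ ℕ) k = 0 := by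
          simp [Finsupp.single_apply, Ne.symm hk]
        simp [hz]
    rw [this]
    have h2 : ((e - (Finsupp.single j 1 : Fin n →₀ ℕ)) j : ℕ) + 1 = e j := by
      simp; omega
    rw [mul_comm, ← h2]; push_cast; rfl
  · have h0 : e j = 0 := by simpa using h
    simp [h0]

lemma const_of_wronsk {n : ℕ} (g D : MvPolynomial (Fin n) ℚ) (hD : D ≠ 0)
    (h : ∀ j, D * pderiv j g = g * pderiv j D) : ∃ c : ℚ, g = C c * D := by
  let m : MonomialOrder (Fin n) := MonomialOrder.lex
  set e := m.degree D with he
  set l := coeff e D with hl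
  have hl0 : l ≠ 0 := by
    have := (m.leadingCoeff_ne_zero_iff (f := D)).2 hD
    exact this
  refine ⟨coeff e g / l, ?_⟩
  set c := coeff e g / l with hc
  by_contra hne
  set g' := g - C c * D with hg'
  have hg0 : g' ≠ 0 := by
    intro h0; apply hne; exact sub_eq_zero.1 h0
  have hrel : ∀ j, D * (X j * pderiv j g') = g' * (X j * pderiv j D) := by
    intro j
    have := h j
    simp only [hg', map_sub, pderiv_C_mul]
    linear_combination (X j) * this
  set e' := m.degree g' with he'
  have hl' : coeff e' g' ≠ 0 := by
    have := (m.leadingCoeff_ne_zero_iff (f := g')).2 hg0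
    exact this
  have hdeg : ∀ (f : MvPolynomial (Fin n) ℚ) (j), m.toSyn (m.degree (X j * pderiv j f)) ≤ m.toSyn (m.degree f) := by
    intro f j
    rw [m.degree_le_iff]
    intro b hb
    rw [mem_support_iff, coeff_X_mul_pderiv] at hb
    exact m.le_degree (by rw [mem_support_iff]; exact right_ne_zero_of_mul hb)
  have heq : e = e' := by
    ext j
    have h1 := congrArg (coeff (e + e')) (hrel j)
    rw [m.coeff_mul_of_add_of_degree_le le_rfl (hdeg g' j), add_comm e e',
      m.coeff_mul_of_add_of_degree_le le_rfl (hdeg D j), coeff_X_mul_pderiv,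
      coeff_X_mul_pderiv] at h1
    have h2 : (e' j : ℚ) = e j := by
      have h3 : l * coeff e' g' ≠ 0 := mul_ne_zero hl0 hl'
      apply mul_left_cancel₀ h3
      rw [hl]
      linear_combination h1
    exact_mod_cast h2.symm
  apply hl'
  rw [← heq, hg', coeff_sub, coeff_C_mul, ← hl, hc]
  field_simp
  ring

theorem gen_wronsk {n : ℕ} : ∀ (l : ℕ) (φ : Fin l → MvPolynomial (Fin n) ℚ),
    LinearIndependent ℚ φ → ∃ i : Fin l → (Fin n →₀ ℕ), (∀ r, (i r).degree + 1 ≤ l) ∧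
      (Matrix.of fun r k => hD (i r) (φ k)).det ≠ 0 := by
  intro l
  induction l with
  | zero => intro φ _; exact ⟨fun _ => 0, fun r => r.elim0, by simp⟩
  | succ l ih =>
    intro φ hφ
    obtain ⟨i, hi, hdet⟩ := ih (fun k => φ k.castSucc)
      (hφ.comp _ (Fin.castSucc_injective l))
    by_contra hcon
    push Not at hcon
    set D := (Matrix.of fun r k => hD (i r) (φ (Fin.castSucc k))).det with hDdef
    -- cofactors
    let g : Fin (l+1) → MvPolynomial (Fin n) ℚ := fun k =>
      (-1) ^ (l + (k : ℕ)) * (Matrix.of fun (r : Fin l) (s : Fin l) => hD (i r) (φ (k.succAbove s))).det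
    have hg_last : g (Fin.last l) = D := by
      simp only [g, hDdef, Fin.val_last, Fin.succAbove_last]
      rw [← two_mul, pow_mul]; simp
    have hrel : ∀ j : Fin n →₀ ℕ, j.degree ≤ l → ∑ k, g k * hD j (φ k) = 0 := by
      intro j hj
      have := hcon (Fin.snoc i j : Fin (l+1) → (Fin n →₀ ℕ)) (by
        intro r
        refine Fin.lastCases ?_ (fun r => ?_) r
        · simpa using hj
        · simp only [Fin.snoc_castSucc]; have := hi r; omega)
      rw [Matrix.det_succ_row _ (Fin.last l)] at this
      rw [← this]
      apply Finset.sum_congr rfl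
      intro k _
      simp only [g, Fin.val_last, Matrix.of_apply, Fin.snoc_last, Fin.succAbove_last]
      have : (Matrix.of fun (r : Fin (l+1)) k => hD ((Fin.snoc i j : Fin (l+1) → (Fin n →₀ ℕ)) r) (φ k)).submatrix Fin.castSucc k.succAbove
        = Matrix.of fun (r : Fin l) (s : Fin l) => hD (i r) (φ (k.succAbove s)) := by
        ext r s : 2
        simp
      rw [this]; ring
    have hconst : ∀ k, ∃ c : ℚ, g k = C c * D := by
      have hh : ∀ j, ∀ k, D * pderiv j (g k) - g k * pderiv j D = 0 := by
        intro j
        have hker : (Matrix.of fun r k => hD (i r) (φ (Fin.castSucc k))).mulVec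
            (fun k => D * pderiv j (g k.castSucc) - g k.castSucc * pderiv j D) = 0 := by
          ext1 r
          have h1 := hrel (i r) (by have := hi r; omega)
          have h2 := congrArg (pderiv j) h1
          rw [map_sum, map_zero] at h2
          have h3 := hrel (i r + Finsupp.single j 1) (by
            have := hi r
            rw [map_add, Finsupp.degree_single]; omega)
          have h4 : ∑ k, pderiv j (g k) * hD (i r) (φ k) = 0 := by
            have : ∀ k, pderiv j (g k * hD (i r) (φ k)) = pderiv j (g k) * hD (i r) (φ k)
               + ((i r j + 1 : ℕ) : MvPolynomial (Fin n) ℚ) * (g k * hD (i r + Finsupp.single j 1) (φ k)) := by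
              intro k
              rw [pderiv_mul, pderiv_hD]; ring
            simp only [this, Finset.sum_add_distrib, ← Finset.mul_sum, h3, mul_zero, add_zero] at h2
            exact h2
          have h5 : ∑ k, (D * pderiv j (g k) - g k * pderiv j D) * hD (i r) (φ k) = 0 := by
            have : ∀ k, (D * pderiv j (g k) - g k * pderiv j D) * hD (i r) (φ k) =
              D * (pderiv j (g k) * hD (i r) (φ k)) - pderiv j D * (g k * hD (i r) (φ k)) := by
              intro k; ring
            simp only [this, Finset.sum_sub_distrib, ← Finset.mul_sum, h4, h1, mul_zero, sub_zero]
          rw [Fin.sum_univ_castSucc, hg_last] at h5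
          simp only [Matrix.mulVec, dotProduct, Matrix.of_apply, Pi.zero_apply]
          rw [sub_self, zero_mul, add_zero] at h5
          rw [← h5]
          apply Finset.sum_congr rfl
          intro k _; ring
        have hz := Matrix.eq_zero_of_mulVec_eq_zero hdet hker
        intro k
        refine Fin.lastCases ?_ (fun k => ?_) k
        · rw [hg_last]; ring
        · exact congrFun hz k
      intro k
      exact const_of_wronsk (g k) D hdet (fun j => sub_eq_zero.1 (hh j k))
    choose c hc using hconst
    have h0 := hrel 0 (by simp)
    simp only [hD_zero] at h0
    have h1 : D * ∑ k, C (c k) * φ k = 0 := by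
      rw [← h0, Finset.mul_sum]
      apply Finset.sum_congr rfl
      intro k _
      rw [hc k]; ring
    have h2 : ∑ k, c k • φ k = 0 := by
      have := (mul_eq_zero.1 h1).resolve_left hdet
      simpa [MvPolynomial.smul_eq_C_mul] using this
    have h3 := (Fintype.linearIndependent_iff.1 hφ) c h2 (Fin.last l)
    apply hdet
    have h4 := hc (Fin.last l)
    rw [hg_last, h3] at h4
    simpa using h4

end RothCF
end

section
namespace RothCF
open MvPolynomial

section L1
variable {σ : Type*}

/-- Sum of absolute values of coefficients. -/
noncomputable def l1 (f : MvPolynomial σ ℤ) : ℝ := ∑ k ∈ f.support, |((coeff k f : ℤ) : ℝ)|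

lemma l1_eq {f : MvPolynomial σ ℤ} {s : Finset (σ →₀ ℕ)} (h : f.support ⊆ s) :
    l1 f = ∑ k ∈ s, |((coeff k f : ℤ) : ℝ)| := by
  apply Finset.sum_subset h
  intro k _ hk
  rw [notMem_support_iff] at hk
  simp [hk]

lemma l1_nonneg (f : MvPolynomial σ ℤ) : 0 ≤ l1 f := Finset.sum_nonneg fun _ _ => abs_nonneg _

lemma l1_zero : l1 (0 : MvPolynomial σ ℤ) = 0 := by simp [l1]

lemma l1_add (f g : MvPolynomial σ ℤ) : l1 (f + g) ≤ l1 f + l1 g := by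
  classical
  rw [l1_eq (support_add (p := f) (q := g)), l1_eq (f := f) (Finset.subset_union_left (s₂ := g.support)),
    l1_eq (f := g) (Finset.subset_union_right (s₁ := f.support)), ← Finset.sum_add_distrib]
  apply Finset.sum_le_sum
  intro k _
  rw [coeff_add]; push_cast
  exact abs_add_le _ _

lemma l1_sum {ι : Type*} (s : Finset ι) (f : ι → MvPolynomial σ ℤ) :
    l1 (∑ i ∈ s, f i) ≤ ∑ i ∈ s, l1 (f i) := by
  classical
  induction s using Finset.induction_on with
  | empty => simp [l1_zero]
  | insert a s ha ih =>
    rw [Finset.sum_insert ha, Finset.sum_insert ha]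
    exact (l1_add _ _).trans (by linarith)

lemma l1_neg (f : MvPolynomial σ ℤ) : l1 (-f) = l1 f := by
  simp [l1, support_neg]

lemma l1_monomial (k : σ →₀ ℕ) (c : ℤ) : l1 (monomial k c) = |(c : ℝ)| := by
  classical
  rw [l1_eq (s := {k}) support_monomial_subset]
  simp

lemma l1_mul (f g : MvPolynomial σ ℤ) : l1 (f * g) ≤ l1 f * l1 g := by
  classical
  conv_lhs => rw [f.as_sum, g.as_sum, Finset.sum_mul_sum]
  refine (l1_sum _ _).trans ?_
  rw [l1, l1, Finset.sum_mul_sum]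
  apply Finset.sum_le_sum
  intro k _
  refine (l1_sum _ _).trans ?_
  apply Finset.sum_le_sum
  intro k' _
  rw [monomial_mul, l1_monomial]
  push_cast
  rw [abs_mul]

lemma l1_one : l1 (1 : MvPolynomial σ ℤ) = 1 := by
  rw [← C_1, ← monomial_zero', l1_monomial]; simp

lemma l1_prod {ι : Type*} (s : Finset ι) (f : ι → MvPolynomial σ ℤ) :
    l1 (∏ i ∈ s, f i) ≤ ∏ i ∈ s, l1 (f i) := by
  classical
  induction s using Finset.induction_on with
  | empty => simp [l1_one]
  | insert a s ha ih =>
    rw [Finset.prod_insert ha, Finset.prod_insert ha]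
    exact (l1_mul _ _).trans (mul_le_mul_of_nonneg_left ih (l1_nonneg _))

lemma l1_det {l : ℕ} (M : Matrix (Fin l) (Fin l) (MvPolynomial σ ℤ)) (B : ℝ)
    (h : ∀ r s, l1 (M r s) ≤ B) : l1 M.det ≤ l.factorial * B ^ l := by
  rw [Matrix.det_apply]
  refine (l1_sum _ _).trans ?_
  have : ∀ τ ∈ (Finset.univ : Finset (Equiv.Perm (Fin l))),
      l1 (Equiv.Perm.sign τ • ∏ i, M (τ i) i) ≤ B ^ l := by
    intro τ _
    have h1 : l1 (Equiv.Perm.sign τ • ∏ i, M (τ i) i) = l1 (∏ i, M (τ i) i) := by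
      rcases Int.units_eq_one_or (Equiv.Perm.sign τ) with h | h <;> rw [h] <;> simp [l1_neg]
    rw [h1]
    refine (l1_prod _ _).trans ?_
    refine (Finset.prod_le_prod (fun _ _ => l1_nonneg _) (fun i _ => h (τ i) i)).trans ?_
    simp
  refine (Finset.sum_le_sum this).trans ?_
  simp [Fintype.card_perm]

lemma coeff_le_l1 (f : MvPolynomial σ ℤ) (k : σ →₀ ℕ) : |((coeff k f : ℤ) : ℝ)| ≤ l1 f := by
  classical
  by_cases h : k ∈ f.support
  · exact Finset.single_le_sum (f := fun k => |((coeff k f : ℤ) : ℝ)|) (fun _ _ => abs_nonneg _) h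
  · rw [notMem_support_iff] at h
    rw [h]; simpa using l1_nonneg f

lemma one_le_l1 {f : MvPolynomial σ ℤ} (h : f ≠ 0) : 1 ≤ l1 f := by
  obtain ⟨k, hk⟩ := ne_zero_iff.1 h
  refine le_trans ?_ (coeff_le_l1 f k)
  have := Int.one_le_abs hk
  exact_mod_cast this

lemma sum_le_l1 {ι : Type*} (f : MvPolynomial σ ℤ) (s : Finset ι) (e : ι → (σ →₀ ℕ))
    (he : Function.Injective e) : ∑ i ∈ s, |((coeff (e i) f : ℤ) : ℝ)| ≤ l1 f := by
  classical
  rw [l1_eq (f := f) (s := f.support ∪ s.map ⟨e, he⟩) Finset.subset_union_left]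
  have : ∑ i ∈ s, |((coeff (e i) f : ℤ) : ℝ)| = ∑ k ∈ s.map ⟨e, he⟩, |((coeff k f : ℤ) : ℝ)| := by
    rw [Finset.sum_map]; rfl
  rw [this]
  exact Finset.sum_le_sum_of_subset_of_nonneg Finset.subset_union_right (fun _ _ _ => abs_nonneg _)

lemma l1_hD [Fintype σ] (i : σ →₀ ℕ) (P : MvPolynomial σ ℤ) (d : σ → ℕ)
    (hd : ∀ j, degreeOf j P ≤ d j) : l1 (hD i P) ≤ 2 ^ (∑ j, d j) * l1 P := by
  classical
  have hs : (hD i P).support ⊆ (hD i P).support := le_rfl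
  calc l1 (hD i P) = ∑ k ∈ (hD i P).support, |((coeff k (hD i P) : ℤ) : ℝ)| := rfl
    _ ≤ ∑ k ∈ (hD i P).support, 2 ^ (∑ j, d j) * |((coeff (k + i) P : ℤ) : ℝ)| := by
        apply Finset.sum_le_sum
        intro k hk
        rw [coeff_hD]
        push_cast
        rw [abs_mul]
        by_cases h0 : coeff (k + i) P = 0
        · simp [h0]
        apply mul_le_mul_of_nonneg_right _ (abs_nonneg _)
        rw [abs_of_nonneg (by positivity)]
        have : bin k i ≤ 2 ^ (∑ j, d j) := by
          rw [bin, ← Finset.prod_pow_eq_pow_sum]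
          apply Finset.prod_le_prod' 
          intro j _
          refine (Nat.choose_le_two_pow _ _).trans (Nat.pow_le_pow_right (by norm_num) ?_)
          have := (degreeOf_le_iff.1 (hd j)) (k + i) (mem_support_iff.2 h0)
          simpa using this
        exact_mod_cast this
    _ = 2 ^ (∑ j, d j) * ∑ k ∈ (hD i P).support, |((coeff (k + i) P : ℤ) : ℝ)| := by
        rw [Finset.mul_sum]
    _ ≤ _ := by
        apply mul_le_mul_of_nonneg_left _ (by positivity)
        exact sum_le_l1 P _ (fun k => k + i) (add_left_injective i)

lemma degreeOf_hD [Fintype σ] (i : σ →₀ ℕ) (P : MvPolynomial σ ℤ) (j : σ) :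
    degreeOf j (hD i P) ≤ degreeOf j P := by
  classical
  rw [degreeOf_le_iff]
  intro k hk
  rw [mem_support_iff, coeff_hD] at hk
  have := degreeOf_le_iff.1 (le_refl (degreeOf j P)) (k + i) (mem_support_iff.2 (right_ne_zero_of_mul hk))
  simp at this
  omega

lemma degreeOf_det {l : ℕ} (M : Matrix (Fin l) (Fin l) (MvPolynomial σ ℤ)) (j : σ) (B : ℕ)
    (h : ∀ r s, degreeOf j (M r s) ≤ B) : degreeOf j M.det ≤ l * B := by
  classical
  rw [Matrix.det_apply]
  refine (degreeOf_sum_le _ _ _).trans ?_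
  apply Finset.sup_le
  intro τ _
  have h1 : degreeOf j (Equiv.Perm.sign τ • ∏ i, M (τ i) i) = degreeOf j (∏ i, M (τ i) i) := by
    rcases Int.units_eq_one_or (Equiv.Perm.sign τ) with h | h <;> rw [h] <;> simp [degreeOf_neg]
  rw [h1]
  refine (degreeOf_prod_le _ _ _).trans ?_
  refine (Finset.sum_le_sum (fun i _ => h (τ i) i)).trans ?_
  simp

end L1

section Index
variable {σ : Type*} [Fintype σ]

/-- weight of an exponent -/
noncomputable def wt (w : σ → ℝ) (k : σ →₀ ℕ) : ℝ := ∑ j, (k j : ℝ) * w j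

lemma wt_add (w : σ → ℝ) (k k' : σ →₀ ℕ) : wt w (k + k') = wt w k + wt w k' := by
  simp [wt, add_mul, Finset.sum_add_distrib]

lemma wt_nonneg {w : σ → ℝ} (hw : ∀ j, 0 ≤ w j) (k : σ →₀ ℕ) : 0 ≤ wt w k :=
  Finset.sum_nonneg fun j _ => mul_nonneg (Nat.cast_nonneg _) (hw j)

/-- index at the origin at least `θ` -/
def Idx (w : σ → ℝ) (θ : ℝ) (f : MvPolynomial σ ℝ) : Prop :=
  ∀ k, coeff k f ≠ 0 → θ ≤ wt w k

lemma Idx.mono {w : σ → ℝ} {θ θ' : ℝ} {f : MvPolynomial σ ℝ} (h : Idx w θ f) (hh : θ' ≤ θ) :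
    Idx w θ' f := fun k hk => hh.trans (h k hk)

lemma Idx.of_nonneg {w : σ → ℝ} (hw : ∀ j, 0 ≤ w j) (f : MvPolynomial σ ℝ) : Idx w 0 f :=
  fun k _ => wt_nonneg hw k

lemma Idx.sum {ι : Type*} {w : σ → ℝ} {θ : ℝ} (s : Finset ι) (f : ι → MvPolynomial σ ℝ)
    (h : ∀ i ∈ s, Idx w θ (f i)) : Idx w θ (∑ i ∈ s, f i) := by
  intro k hk
  rw [coeff_sum] at hk
  obtain ⟨i, hi, hne⟩ := Finset.exists_ne_zero_of_sum_ne_zero hk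
  exact h i hi k hne

lemma Idx.neg {w : σ → ℝ} {θ : ℝ} {f : MvPolynomial σ ℝ} (h : Idx w θ f) : Idx w θ (-f) := by
  intro k hk
  rw [coeff_neg, neg_ne_zero] at hk
  exact h k hk

lemma Idx.mul {w : σ → ℝ} {θ θ' : ℝ} {f g : MvPolynomial σ ℝ} (hf : Idx w θ f) (hg : Idx w θ' g) :
    Idx w (θ + θ') (f * g) := by
  classical
  intro k hk
  rw [coeff_mul] at hk
  obtain ⟨p, hp, hne⟩ := Finset.exists_ne_zero_of_sum_ne_zero hk
  rw [Finset.HasAntidiagonal.mem_antidiagonal] at hp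
  rw [← hp, wt_add]
  exact add_le_add (hf _ (left_ne_zero_of_mul hne)) (hg _ (right_ne_zero_of_mul hne))

lemma Idx.prod {ι : Type*} {w : σ → ℝ} (hw : ∀ j, 0 ≤ w j) (s : Finset ι) (θ : ι → ℝ)
    (f : ι → MvPolynomial σ ℝ)
    (h : ∀ i ∈ s, Idx w (θ i) (f i)) : Idx w (∑ i ∈ s, θ i) (∏ i ∈ s, f i) := by
  classical
  induction s using Finset.induction_on with
  | empty => simpa using Idx.of_nonneg hw _
  | insert a s ha ih =>
    rw [Finset.prod_insert ha, Finset.sum_insert ha]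
    exact (h a (Finset.mem_insert_self _ _)).mul (ih fun i hi => h i (Finset.mem_insert_of_mem hi))

lemma Idx.det {l : ℕ} {w : σ → ℝ} (hw : ∀ j, 0 ≤ w j) (θ : Fin l → ℝ)
    (M : Matrix (Fin l) (Fin l) (MvPolynomial σ ℝ))
    (h : ∀ r s, Idx w (θ s) (M r s)) : Idx w (∑ s, θ s) M.det := by
  rw [Matrix.det_apply]
  apply Idx.sum
  intro τ _
  have := Idx.prod hw Finset.univ θ (fun i => M (τ i) i) (fun i _ => h (τ i) i)
  rcases Int.units_eq_one_or (Equiv.Perm.sign τ) with h | h <;> rw [h]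
  · simpa using this
  · simpa using this.neg

lemma Idx.hD {w : σ → ℝ} {θ : ℝ} {f : MvPolynomial σ ℝ} (h : Idx w θ f) (i : σ →₀ ℕ) :
    Idx w (θ - wt w i) (RothCF.hD i f) := by
  intro k hk
  rw [coeff_hD] at hk
  have := h _ (right_ne_zero_of_mul hk)
  rw [wt_add] at this
  linarith

end Index
end RothCF
end

section
namespace RothCF
open MvPolynomial

section Tens
variable {R : Type*} [CommRing R] {m : ℕ}

/-- embedding of polynomials in the variables `1..m`. -/
noncomputable def iot : MvPolynomial (Fin m) R →ₐ[R] MvPolynomial (Fin (m + 1)) R :=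
  rename Fin.succ

/-- embedding of polynomials in the variable `0`. -/
noncomputable def kap : Polynomial R →ₐ[R] MvPolynomial (Fin (m + 1)) R :=
  Polynomial.aeval (X 0)

lemma finSucc_iot (A : MvPolynomial (Fin m) R) :
    finSuccEquiv R m (iot A) = Polynomial.C A := by
  have : (finSuccEquiv R m).toAlgHom.comp iot =
      (Algebra.ofId (MvPolynomial (Fin m) R) (Polynomial (MvPolynomial (Fin m) R))).restrictScalars R := by
    apply MvPolynomial.algHom_ext
    intro j
    simp [iot, finSuccEquiv_X_succ, Algebra.ofId_apply, Polynomial.algebraMap_apply]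
  have h := congrArg (fun g => g A) this
  simpa [Algebra.ofId_apply] using h

lemma finSucc_kap (B : Polynomial R) :
    finSuccEquiv R m (kap B) = B.map C := by
  have : ((finSuccEquiv R m).toAlgHom.comp kap) =
      (Polynomial.mapAlgHom (Algebra.ofId R (MvPolynomial (Fin m) R))) := by
    apply Polynomial.algHom_ext
    simp [kap, finSuccEquiv_X_zero]
  have h := congrArg (fun g => g B) this
  simpa using h

lemma coeff_tens (A : MvPolynomial (Fin m) R) (B : Polynomial R) (s : ℕ) (I : Fin m →₀ ℕ) :
    coeff (Finsupp.cons s I) (iot A * kap B) = coeff I A * B.coeff s := by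
  rw [← finSuccEquiv_coeff_coeff, map_mul, finSucc_iot, finSucc_kap, Polynomial.coeff_C_mul,
    Polynomial.coeff_map, mul_comm A, coeff_C_mul, mul_comm]

lemma ext_cons {f g : MvPolynomial (Fin (m + 1)) R}
    (h : ∀ s I, coeff (Finsupp.cons s I) f = coeff (Finsupp.cons s I) g) : f = g := by
  ext e
  rw [← Finsupp.cons_tail e]
  exact h _ _

lemma map_iot {S : Type*} [CommRing S] (φ : R →+* S) (A : MvPolynomial (Fin m) R) :
    map φ (iot A) = iot (map φ A) := by
  simp [iot, map_rename]

lemma map_kap {S : Type*} [CommRing S] (φ : R →+* S) (B : Polynomial R) :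
    map φ (kap B : MvPolynomial (Fin (m + 1)) R) = kap (B.map φ) := by
  induction B using Polynomial.induction_on' with
  | add p q hp hq => simp [hp, hq]
  | monomial n a => simp [kap, Polynomial.aeval_monomial, algebraMap_eq]

lemma shift_iot (x : Fin (m + 1) → R) (A : MvPolynomial (Fin m) R) :
    shift x (iot A) = iot (shift (fun j => x j.succ) A) := by
  have : (shift x).comp (iot (m := m)) = iot.comp (shift (fun j => x j.succ)) := by
    apply MvPolynomial.algHom_ext
    intro j
    simp [shift, iot]
  exact congrArg (fun g => g A) this

lemma shift_kap (x : Fin (m + 1) → R) (B : Polynomial R) :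
    shift x (kap B) = kap (Polynomial.taylor (x 0) B) := by
  have : (shift x).comp (kap (m := m)) = kap.comp (Polynomial.taylorAlgHom (x 0)) := by
    apply Polynomial.algHom_ext
    simp [shift, kap, algebraMap_eq]
  exact congrArg (fun g => g B) this

lemma bin_cons (e s : ℕ) (E I : Fin m →₀ ℕ) :
    bin (Finsupp.cons e E) (Finsupp.cons s I) = (e + s).choose s * bin E I := by
  simp [bin, Fin.prod_univ_succ]

lemma cons_add (e s : ℕ) (E I : Fin m →₀ ℕ) :
    Finsupp.cons e E + Finsupp.cons s I = Finsupp.cons (e + s) (E + I) := by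
  ext j
  refine Fin.cases ?_ (fun j => ?_) j <;> simp

lemma hD_tens (A : MvPolynomial (Fin m) R) (B : Polynomial R) (s : ℕ) (I : Fin m →₀ ℕ) :
    hD (Finsupp.cons s I) (iot A * kap B) = iot (hD I A) * kap (Polynomial.hasseDeriv s B) := by
  apply ext_cons
  intro e E
  rw [coeff_hD, cons_add, coeff_tens, coeff_tens, coeff_hD, Polynomial.hasseDeriv_coeff, bin_cons]
  push_cast
  ring

lemma wt_cons (w : Fin (m + 1) → ℝ) (s : ℕ) (I : Fin m →₀ ℕ) :
    wt w (Finsupp.cons s I) = s * w 0 + wt (fun j => w j.succ) I := by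
  simp [wt, Fin.sum_univ_succ]

end Tens

lemma coeff_kap0 (B : Polynomial ℚ) (e : Fin 1 →₀ ℕ) :
    coeff e (kap B : MvPolynomial (Fin 1) ℚ) = B.coeff (e 0) := by
  have := coeff_tens (m := 0) (1 : MvPolynomial (Fin 0) ℚ) B (e 0) 0
  rw [map_one, one_mul] at this
  have h : Finsupp.cons (e 0) (0 : Fin 0 →₀ ℕ) = e := by
    ext j; rw [show j = 0 from Fin.fin_one_eq_zero j]; simp
  rw [h] at this
  simpa using this

lemma uni_wronsk (l : ℕ) (B : Fin l → Polynomial ℚ) (h : LinearIndependent ℚ B) :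
    (Matrix.of fun k s : Fin l => Polynomial.hasseDeriv (s : ℕ) (B k)).det ≠ 0 := by
  have hinj : Function.Injective (kap (R := ℚ) (m := 0)) := by
    intro p q hpq
    ext n
    have := congrArg (coeff (Finsupp.single 0 n)) hpq
    simpa [coeff_kap0] using this
  have hli : LinearIndependent ℚ (fun k => (kap (B k) : MvPolynomial (Fin 1) ℚ)) := by
    have := h.map' (kap (R := ℚ) (m := 0)).toLinearMap (LinearMap.ker_eq_bot.2 hinj)
    exact this
  obtain ⟨i, hi, hdet⟩ := gen_wronsk l _ hli
  have hkap : ∀ (I : Fin 1 →₀ ℕ) (b : Polynomial ℚ), hD I (kap b : MvPolynomial (Fin 1) ℚ) =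
      kap (Polynomial.hasseDeriv (I 0) b) := by
    intro I b
    ext e
    rw [coeff_hD, coeff_kap0, coeff_kap0, Polynomial.hasseDeriv_coeff]
    simp [bin]
  have hlt : ∀ r, (i r) 0 < l := by
    intro r
    have := hi r
    rw [Finsupp.degree_eq_sum] at this
    simp at this
    omega
  let ρ : Fin l → Fin l := fun r => ⟨i r 0, hlt r⟩
  have hρ : Function.Injective ρ := by
    intro r r' hrr
    by_contra hne
    apply hdet
    apply Matrix.det_zero_of_row_eq hne
    funext k
    simp only [Matrix.of_apply]
    have : i r 0 = i r' 0 := by simpa [ρ] using hrr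
    rw [hkap, hkap, this]
  have hbij : Function.Bijective ρ := Finite.injective_iff_bijective.1 hρ
  let τ : Equiv.Perm (Fin l) := Equiv.ofBijective ρ hbij
  intro h0
  apply hdet
  have e1 : (Matrix.of fun r k => hD (i r) (kap (B k) : MvPolynomial (Fin 1) ℚ)) =
     ((kap (R := ℚ) (m := 0)).mapMatrix (Matrix.of fun s k : Fin l => Polynomial.hasseDeriv (s : ℕ) (B k))).submatrix τ id := by
    ext1 r k
    simp only [Matrix.of_apply, hkap, Matrix.submatrix_apply, AlgHom.mapMatrix_apply, Matrix.map_apply]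
    rfl
  rw [e1, Matrix.det_permute, ← AlgHom.map_det]
  have e2 : (Matrix.of fun s k : Fin l => Polynomial.hasseDeriv (s : ℕ) (B k)).det = 0 := by
    rw [← Matrix.det_transpose]; exact h0
  rw [e2]; simp

lemma decomp {m : ℕ} (P : MvPolynomial (Fin (m + 1)) ℚ) (hP : P ≠ 0) (d0 : ℕ)
    (hd : degreeOf 0 P ≤ d0) :
    ∃ (l : ℕ) (A : Fin l → MvPolynomial (Fin m) ℚ) (B : Fin l → Polynomial ℚ),
      1 ≤ l ∧ l ≤ d0 + 1 ∧ LinearIndependent ℚ A ∧ LinearIndependent ℚ B ∧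
      P = ∑ k, iot (A k) * kap (B k) := by
  classical
  set F := finSuccEquiv ℚ m P with hF
  have hdeg : F.natDegree ≤ d0 := by rw [hF, natDegree_finSuccEquiv]; exact hd
  let v : Fin (d0 + 1) → MvPolynomial (Fin m) ℚ := fun s => F.coeff s
  let V := Submodule.span ℚ (Set.range v)
  haveI : Module.Finite ℚ V := Module.Finite.span_of_finite ℚ (Set.finite_range v)
  let b := Module.finBasis ℚ V
  have hv : ∀ s, v s ∈ V := fun s => Submodule.subset_span ⟨s, rfl⟩
  let β : Fin (d0 + 1) → Fin (Module.finrank ℚ V) → ℚ := fun s k => b.repr ⟨v s, hv s⟩ k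
  let B : Fin (Module.finrank ℚ V) → Polynomial ℚ := fun k => ∑ s : Fin (d0 + 1), Polynomial.monomial (s : ℕ) (β s k)
  have hBc : ∀ k (s : Fin (d0 + 1)), (B k).coeff s = β s k := by
    intro k s
    simp only [B, Polynomial.finset_sum_coeff, Polynomial.coeff_monomial]
    rw [Finset.sum_eq_single s]
    · simp
    · intro s' _ hs'
      rw [if_neg]; intro h; exact hs' (Fin.ext h)
    · simp
  have hBc2 : ∀ k (s : ℕ), d0 < s → (B k).coeff s = 0 := by
    intro k s hs
    simp only [B, Polynomial.finset_sum_coeff, Polynomial.coeff_monomial]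
    apply Finset.sum_eq_zero
    intro s' _
    rw [if_neg]; have := s'.2; omega
  have hPeq : P = ∑ k, iot ((b k : V) : MvPolynomial (Fin m) ℚ) * kap (B k) := by
    apply ext_cons
    intro s I
    rw [coeff_sum]
    simp only [coeff_tens]
    rw [← finSuccEquiv_coeff_coeff, ← hF]
    by_cases hs : s < d0 + 1
    · have h1 := b.sum_repr ⟨v ⟨s, hs⟩, hv ⟨s, hs⟩⟩
      have h2 := congrArg (fun x : V => coeff I (x : MvPolynomial (Fin m) ℚ)) h1
      simp only [Submodule.coe_sum, Submodule.coe_smul, coeff_sum, coeff_smul, smul_eq_mul] at h2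
      change _ = coeff I (F.coeff s) at h2
      rw [← h2]
      apply Finset.sum_congr rfl
      intro k _
      have := hBc k ⟨s, hs⟩
      simp only at this
      rw [this, mul_comm]
    · rw [Polynomial.coeff_eq_zero_of_natDegree_lt (by omega)]
      simp only [coeff_zero]
      symm; apply Finset.sum_eq_zero
      intro k _
      rw [hBc2 k s (by omega), mul_zero]
  refine ⟨Module.finrank ℚ V, fun k => (b k : V), B, ?_, ?_, ?_, ?_, hPeq⟩
  · by_contra hl
    have h0 : Module.finrank ℚ V = 0 := by omega
    apply hP
    rw [hPeq]
    apply Finset.sum_eq_zero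
    intro k _
    have := k.2
    omega
  · have := finrank_range_le_card (R := ℚ) v
    simpa [Set.finrank] using this
  · exact b.linearIndependent.map' V.subtype (Submodule.ker_subtype V)
  · rw [Fintype.linearIndependent_iff]
    intro c hc k
    let φ : V →ₗ[ℚ] ℚ := b.constr ℚ c
    have hφ : ∀ s, φ ⟨v s, hv s⟩ = 0 := by
      intro s
      have := congrArg (fun p => Polynomial.coeff p (s : ℕ)) hc
      simp only [Polynomial.finset_sum_coeff, Polynomial.coeff_smul, hBc, smul_eq_mul,
        Polynomial.coeff_zero] at this
      simp only [φ, Module.Basis.constr_apply_fintype, Module.Basis.equivFun_apply, smul_eq_mul]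
      rw [← this]
      apply Finset.sum_congr rfl
      intro k _
      rw [mul_comm]
    have hall : ∀ x : V, φ x = 0 := by
      rintro ⟨x, hx⟩
      induction hx using Submodule.span_induction with
      | mem x h => obtain ⟨s, rfl⟩ := h; exact hφ s
      | zero => exact map_zero φ
      | add x y hx hy h1 h2 =>
        have := map_add φ ⟨x, hx⟩ ⟨y, hy⟩
        rw [h1, h2] at this; simpa using this
      | smul a x hx h1 =>
        have := map_smul φ a ⟨x, hx⟩
        rw [h1] at this; simpa using this
    have := hall (b k)
    simpa [φ] using this

end RothCF
end

section
namespace RothCF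
open MvPolynomial

/-- Univariate version of `l1`. -/
noncomputable def l1u (G : Polynomial ℤ) : ℝ := ∑ k ∈ G.support, |((G.coeff k : ℤ) : ℝ)|

/-- Liouville-type property of the point `ξ` with height `L`. -/
def Star (ξ L : ℝ) : Prop := ∀ G : Polynomial ℤ, G ≠ 0 → ∀ k : ℕ,
  (Polynomial.X - Polynomial.C ξ) ^ k ∣ G.map (Int.castRingHom ℝ) → k * L ≤ Real.log (l1u G)

lemma wronsk_step {m : ℕ} (P : MvPolynomial (Fin (m + 1)) ℤ) (hP : P ≠ 0) (d0 : ℕ)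
    (hd : degreeOf 0 P ≤ d0) :
    ∃ (l : ℕ) (i : Fin l → (Fin m →₀ ℕ)), 1 ≤ l ∧ l ≤ d0 + 1 ∧ (∀ r, (i r).degree + 1 ≤ l) ∧
      ∃ (U : MvPolynomial (Fin m) ℚ) (V : Polynomial ℚ), U ≠ 0 ∧ V ≠ 0 ∧
        map (Int.castRingHom ℚ) (Matrix.of fun r s : Fin l => hD (Finsupp.cons (s : ℕ) (i r)) P).det
          = iot U * kap V := by
  have hinj : Function.Injective (Int.castRingHom ℚ) := Int.cast_injective
  have hP' : map (Int.castRingHom ℚ) P ≠ 0 := by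
    rw [Ne, map_eq_zero_iff _ (map_injective _ hinj)]; exact hP
  have hd' : degreeOf 0 (map (Int.castRingHom ℚ) P) ≤ d0 := by
    rw [degreeOf_le_iff] at hd ⊢
    intro k hk
    exact hd k (support_map_subset _ _ hk)
  obtain ⟨l, A, B, hl1, hl2, hA, hB, hdec⟩ := decomp _ hP' d0 hd'
  obtain ⟨i, hi, hdet⟩ := gen_wronsk l A hA
  have hdetB := uni_wronsk l B hB
  refine ⟨l, i, hl1, hl2, hi, _, _, hdet, hdetB, ?_⟩
  rw [AlgHom.map_det, AlgHom.map_det, ← Matrix.det_mul, RingHom.map_det]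
  congr 1
  ext1 r s
  simp only [RingHom.mapMatrix_apply, Matrix.map_apply, Matrix.of_apply, AlgHom.mapMatrix_apply,
    Matrix.mul_apply]
  rw [map_hD, hdec, map_sum]
  apply Finset.sum_congr rfl
  intro k _
  rw [hD_tens]

lemma split_int {m : ℕ} (W : MvPolynomial (Fin (m + 1)) ℤ) (U : MvPolynomial (Fin m) ℚ)
    (V : Polynomial ℚ) (hU : U ≠ 0) (hV : V ≠ 0)
    (h : map (Int.castRingHom ℚ) W = iot U * kap V) :
    ∃ (w : ℤ) (U' : MvPolynomial (Fin m) ℤ) (V' : Polynomial ℤ), w ≠ 0 ∧ U' ≠ 0 ∧ V' ≠ 0 ∧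
      C w * W = iot U' * kap V' ∧ l1 U' ≤ l1 W ∧ l1u V' ≤ l1 W ∧
      ∀ j, degreeOf j U' ≤ degreeOf j.succ W := by
  classical
  obtain ⟨I0, hI0⟩ := ne_zero_iff.1 hU
  obtain ⟨s0, hs0⟩ : ∃ s, V.coeff s ≠ 0 := by
    by_contra hh
    push Not at hh
    exact hV (Polynomial.ext (by simpa using hh))
  have hc : ∀ s I, ((coeff (Finsupp.cons s I) W : ℤ) : ℚ) = coeff I U * V.coeff s := by
    intro s I
    rw [← coeff_tens, ← h, coeff_map]; simp
  set F := finSuccEquiv ℤ m W with hF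
  let U' := F.coeff s0
  let V' : Polynomial ℤ := ∑ s ∈ Finset.range (F.natDegree + 1), Polynomial.monomial s (coeff I0 (F.coeff s))
  have hU'c : ∀ I, coeff I U' = coeff (Finsupp.cons s0 I) W := fun I => by
    simp only [U', hF]; rw [finSuccEquiv_coeff_coeff]
  have hV'c : ∀ s, V'.coeff s = coeff (Finsupp.cons s I0) W := by
    intro s
    rw [← finSuccEquiv_coeff_coeff, ← hF]
    simp only [V', Polynomial.finset_sum_coeff, Polynomial.coeff_monomial]
    by_cases hs : s < F.natDegree + 1
    · rw [Finset.sum_eq_single s]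
      · simp
      · intro s' _ h'; rw [if_neg h']
      · intro h'; exact absurd (Finset.mem_range.2 hs) h'
    · rw [Polynomial.coeff_eq_zero_of_natDegree_lt (by omega)]
      simp only [coeff_zero]
      apply Finset.sum_eq_zero
      intro s' hs'
      rw [Finset.mem_range] at hs'
      rw [if_neg (by omega)]
  have hw : coeff (Finsupp.cons s0 I0) W ≠ 0 := by
    intro h0
    have := hc s0 I0
    rw [h0] at this
    have h2 := mul_ne_zero hI0 hs0
    apply h2; rw [← this]; simp
  refine ⟨coeff (Finsupp.cons s0 I0) W, U', V', hw, ?_, ?_, ?_, ?_, ?_, ?_⟩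
  · intro h0; apply hw; rw [← hU'c, h0, coeff_zero]
  · intro h0; apply hw; rw [← hV'c, h0, Polynomial.coeff_zero]
  · apply ext_cons
    intro s I
    rw [coeff_C_mul, coeff_tens, hU'c, hV'c]
    have : ((coeff (Finsupp.cons s0 I0) W * coeff (Finsupp.cons s I) W : ℤ) : ℚ) =
      ((coeff (Finsupp.cons s0 I) W * coeff (Finsupp.cons s I0) W : ℤ) : ℚ) := by
      push_cast
      rw [hc, hc, hc, hc]; ring
    exact_mod_cast this
  · have := sum_le_l1 W U'.support (fun I => Finsupp.cons s0 I) (Finsupp.cons_right_injective s0)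
    simpa only [l1, hU'c] using this
  · have := sum_le_l1 W V'.support (fun s => Finsupp.cons s I0) (fun s s' hs => by
      simpa using congrArg (fun g => g 0) hs)
    simpa only [l1u, hV'c] using this
  · intro j
    rw [degreeOf_le_iff]
    intro I hI
    rw [mem_support_iff, hU'c] at hI
    have := degreeOf_le_iff.1 (le_refl (degreeOf j.succ W)) _ (mem_support_iff.2 hI)
    simpa using this

lemma taylor_order (ξ : ℝ) (B : Polynomial ℝ) (hB : B ≠ 0) :
    ∃ k, (Polynomial.X - Polynomial.C ξ) ^ k ∣ B ∧ (Polynomial.taylor ξ B).coeff k ≠ 0 := by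
  have h0 : Polynomial.taylor ξ B ≠ 0 := by
    rw [Ne, Polynomial.taylor_eq_zero]; exact hB
  refine ⟨(Polynomial.taylor ξ B).natTrailingDegree, ?_, ?_⟩
  · rw [Polynomial.X_sub_C_pow_dvd_iff, ← Polynomial.taylor_apply, Polynomial.X_pow_dvd_iff]
    intro d hd
    exact Polynomial.coeff_eq_zero_of_lt_natTrailingDegree hd
  · exact Polynomial.trailingCoeff_nonzero_iff_nonzero.2 h0

lemma sum_lower (l d0 : ℕ) (e : ℝ) (he : 0 < e) (he1 : e ≤ 1) (hl : l ≤ 2 * d0) (hd : 1 ≤ d0) :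
    e ^ 2 * l / 8 ≤ ∑ s : Fin l, max 0 (e - (s : ℕ) * (1 / d0 : ℝ)) := by
  rw [Fin.sum_univ_eq_sum_range (fun s => max 0 (e - (s : ℕ) * (1 / d0 : ℝ)))]
  set n := ⌈e * l / 4⌉₊ with hn
  have hnl : n ≤ l := by
    rw [hn, Nat.ceil_le]
    have : (0 : ℝ) ≤ l := Nat.cast_nonneg _
    nlinarith
  have h1 : ∑ s ∈ Finset.range n, (e / 2) ≤ ∑ s ∈ Finset.range n, max 0 (e - (s : ℕ) * (1 / d0 : ℝ)) := by
    apply Finset.sum_le_sum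
    intro s hs
    rw [Finset.mem_range, hn, Nat.lt_ceil] at hs
    apply le_max_of_le_right
    have hd' : (1 : ℝ) ≤ d0 := by exact_mod_cast hd
    have hl' : (l : ℝ) ≤ 2 * d0 := by exact_mod_cast hl
    have : (s : ℝ) * (1 / d0) ≤ e / 2 := by
      rw [mul_one_div, div_le_iff₀ (by linarith)]
      nlinarith
    linarith
  have h2 := Finset.sum_le_sum_of_subset_of_nonneg (f := fun s : ℕ => max 0 (e - (s : ℕ) * (1 / d0 : ℝ)))
    (Finset.range_mono hnl) (fun _ _ _ => le_max_left _ _)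
  refine le_trans ?_ (h1.trans h2)
  simp only [Finset.sum_const, Finset.card_range, nsmul_eq_mul]
  have := Nat.le_ceil (e * l / 4)
  rw [← hn] at this
  nlinarith

end RothCF
end

section
namespace RothCF
open MvPolynomial

/-- Statement of Roth's lemma in `m` variables with parameters `ε`, `η`. -/
def RothProp (m : ℕ) (ε η : ℝ) : Prop :=
  ∀ (d : Fin m → ℕ) (ξ L : Fin m → ℝ) (T : ℝ) (P : MvPolynomial (Fin m) ℤ),
    (∀ j, 1 ≤ d j) → (∀ j k, j < k → (d j : ℝ) ≤ η * d k) → (∀ j, Star (ξ j) (L j)) →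
    0 ≤ T → (∀ j, T ≤ d j * L j) → (∑ j, (d j : ℝ) ≤ η * T) → P ≠ 0 →
    (∀ j, degreeOf j P ≤ d j) → Real.log (l1 P) ≤ η * T →
    ∃ I : Fin m →₀ ℕ, wt (fun j => 1 / (d j : ℝ)) I ≤ ε ∧
      coeff I (shift ξ (map (Int.castRingHom ℝ) P)) ≠ 0

lemma log_l1_det {σ : Type*} {l : ℕ} (hl : 1 ≤ l) (M : Matrix (Fin l) (Fin l) (MvPolynomial σ ℤ)) (N : ℕ) (Q : ℝ)
    (hQ : 1 ≤ Q) (hW : M.det ≠ 0)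
    (h : ∀ r s, l1 (M r s) ≤ 2 ^ N * Q) :
    Real.log (l1 M.det) ≤ l * ((l - 1 : ℕ) + N + Real.log Q) := by
  have h1 := l1_det M _ h
  have h0 : 0 < l1 M.det := by linarith [one_le_l1 hW]
  have hl0 : (0 : ℝ) < l := by exact_mod_cast hl
  have h2 : (l.factorial : ℝ) * (2 ^ N * Q) ^ l ≤ (l * (2 ^ N * Q)) ^ l := by
    rw [mul_pow (l : ℝ)]
    apply mul_le_mul_of_nonneg_right _ (by positivity)
    exact_mod_cast Nat.factorial_le_pow l
  have h3 := Real.log_le_log h0 (h1.trans h2)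
  rw [Real.log_pow, Real.log_mul hl0.ne' (by positivity), Real.log_mul (by positivity) (by positivity),
    Real.log_pow] at h3
  refine h3.trans ?_
  apply mul_le_mul_of_nonneg_left _ hl0.le
  have h4 := Real.log_le_sub_one_of_pos hl0
  have h5 : ((l - 1 : ℕ) : ℝ) = l - 1 := by push_cast [hl]; ring
  have h6 : Real.log 2 ≤ 1 := by linarith [Real.log_two_lt_d9]
  have h7 : (0 : ℝ) ≤ N := Nat.cast_nonneg _
  rw [h5]
  nlinarith

lemma roth_step (m : ℕ) (ε : ℝ) (hε : 0 < ε) (hε1 : ε ≤ 1) (η₁ : ℝ) (hη₁ : 0 < η₁) (hη₁' : η₁ ≤ 1)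
    (ih : RothProp m (ε ^ 2 / 100) η₁) :
    RothProp (m + 1) ε (min (η₁ / 3) (ε ^ 2 / 1000)) := by
  set η := min (η₁ / 3) (ε ^ 2 / 1000) with hη
  have hηa : 3 * η ≤ η₁ := by have := min_le_left (η₁ / 3) (ε ^ 2 / 1000); rw [← hη] at this; linarith
  have hηb : η ≤ ε ^ 2 / 1000 := min_le_right _ _
  have hη0 : 0 < η := by rw [hη]; apply lt_min <;> positivity
  intro d ξ L T P hd hdd hstar hT hTL hsum hP hdeg hlog
  by_contra hcon
  push Not at hcon
  obtain ⟨l, i, hl1, hl2, hi, U, V, hU, hV, hW⟩ := wronsk_step P hP (d 0) (hdeg 0)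
  set M : Matrix (Fin l) (Fin l) (MvPolynomial (Fin (m + 1)) ℤ) :=
    Matrix.of fun r s : Fin l => hD (Finsupp.cons (s : ℕ) (i r)) P with hM
  obtain ⟨w, U', V', hw, hU', hV', hWs, hlU, hlV, hdU⟩ := split_int _ U V hU hV hW
  have hd0 : (1 : ℝ) ≤ d 0 := by exact_mod_cast hd 0
  have hl0 : (0 : ℝ) < l := by exact_mod_cast hl1
  have hdpos : ∀ j, (0 : ℝ) < d j := fun j => by exact_mod_cast hd j
  have hd0sum : (d 0 : ℝ) ≤ ∑ j, (d j : ℝ) :=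
    Finset.single_le_sum (f := fun j => (d j : ℝ)) (fun j _ => (hdpos j).le) (Finset.mem_univ 0)
  have hTpos : 0 < T := by
    by_contra h
    have : T = 0 := by linarith
    rw [this] at hsum; linarith
  have hWne : M.det ≠ 0 := by
    intro h0
    rw [h0, mul_zero] at hWs
    have hz : ∀ s I, coeff I U' * V'.coeff s = 0 := by
      intro s I; rw [← coeff_tens, ← hWs, coeff_zero]
    obtain ⟨I, hI⟩ := ne_zero_iff.1 hU'
    apply hV'
    ext s
    have := hz s I
    simpa [hI] using this
  have hlogW : Real.log (l1 M.det) ≤ l * (3 * η * T) := by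
    have := log_l1_det hl1 M (∑ j, d j) (l1 P) (one_le_l1 hP) hWne (fun r s => by
      simpa [hM] using l1_hD _ P d hdeg)
    refine this.trans (mul_le_mul_of_nonneg_left ?_ hl0.le)
    have h1 : ((l - 1 : ℕ) : ℝ) ≤ d 0 := by
      have : l - 1 ≤ d 0 := by omega
      exact_mod_cast this
    push_cast
    linarith
  -- apply the induction hypothesis
  have hlogU : Real.log (l1 U') ≤ l * (3 * η * T) :=
    (Real.log_le_log (by linarith [one_le_l1 hU']) hlU).trans hlogW
  obtain ⟨I', hI'w, hI'⟩ := ih (fun j => l * d j.succ) (fun j => ξ j.succ) (fun j => L j.succ) (l * T) U'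
    (fun j => Nat.mul_pos hl1 (hd _))
    (fun j k hjk => by
      have := hdd j.succ k.succ (Fin.succ_lt_succ_iff.2 hjk)
      push_cast
      have h2 : η * (d k.succ : ℝ) ≤ η₁ * d k.succ :=
        mul_le_mul_of_nonneg_right (by linarith) (hdpos _).le
      calc (l : ℝ) * d j.succ ≤ l * (η₁ * d k.succ) := mul_le_mul_of_nonneg_left (this.trans h2) hl0.le
        _ = _ := by ring)
    (fun j => hstar j.succ) (by positivity)
    (fun j => by
      push_cast
      rw [mul_assoc]
      exact mul_le_mul_of_nonneg_left (hTL _) hl0.le)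
    (by
      push_cast
      rw [← Finset.mul_sum, mul_left_comm]
      apply mul_le_mul_of_nonneg_left _ hl0.le
      rw [Fin.sum_univ_succ] at hsum
      have : η * T ≤ η₁ * T := mul_le_mul_of_nonneg_right (by linarith) hT
      linarith)
    hU'
    (fun j => (hdU j).trans (degreeOf_det M _ _ (fun r s => by
      simp only [hM, Matrix.of_apply]
      exact (degreeOf_hD _ P _).trans (hdeg _))))
    (by
      refine hlogU.trans ?_
      rw [mul_left_comm]
      exact mul_le_mul_of_nonneg_right hηa (by positivity))
  -- the variable 0
  have hinjR : Function.Injective (Int.castRingHom ℝ) := Int.cast_injective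
  obtain ⟨k, hkdvd, hk⟩ := taylor_order (ξ 0) (V'.map (Int.castRingHom ℝ))
    (by rw [Ne, Polynomial.map_eq_zero_iff hinjR]; exact hV')
  have hkL := hstar 0 V' hV' k hkdvd
  have hlV1 : 0 < l1u V' := by
    apply Finset.sum_pos
    · intro k hk
      rw [Polynomial.mem_support_iff] at hk
      exact abs_pos.2 (by exact_mod_cast hk)
    · exact Polynomial.support_nonempty.2 hV'
  have hL0 : 0 < L 0 := by
    have := hTL 0
    by_contra h
    have : (d 0 : ℝ) * L 0 ≤ 0 := mul_nonpos_of_nonneg_of_nonpos (by linarith) (by linarith)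
    linarith
  have hkd : (k : ℝ) ≤ 3 * η * l * d 0 := by
    have h1 : (k : ℝ) * L 0 ≤ l * (3 * η * T) :=
      hkL.trans ((Real.log_le_log hlV1 hlV).trans hlogW)
    have h2 : l * (3 * η * T) ≤ l * (3 * η * (d 0 * L 0)) := by
      apply mul_le_mul_of_nonneg_left _ hl0.le
      exact mul_le_mul_of_nonneg_left (hTL 0) (by positivity)
    have h3 : (k : ℝ) * L 0 ≤ (3 * η * l * d 0) * L 0 := by nlinarith
    exact le_of_mul_le_mul_right h3 hL0
  -- nonvanishing coefficient of shifted W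
  set w' : Fin (m + 1) → ℝ := fun j => 1 / (d j : ℝ) with hw'
  have hw'0 : ∀ j, 0 ≤ w' j := fun j => by simp only [hw']; positivity
  have hne : coeff (Finsupp.cons k I') (shift ξ (map (Int.castRingHom ℝ) M.det)) ≠ 0 := by
    intro h0
    have h1 : shift ξ (map (Int.castRingHom ℝ) (C w * M.det)) =
        iot (shift (fun j => ξ j.succ) (map (Int.castRingHom ℝ) U')) *
          kap (Polynomial.taylor (ξ 0) (V'.map (Int.castRingHom ℝ))) := by
      rw [hWs, map_mul, map_mul, map_iot, map_kap, shift_iot, shift_kap]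
    have h2 := congrArg (coeff (Finsupp.cons k I')) h1
    rw [coeff_tens, map_mul, map_mul, map_C] at h2
    have h3 : shift ξ (C ((Int.castRingHom ℝ) w)) = C ((Int.castRingHom ℝ) w) := by
      simp [shift]
    rw [h3, coeff_C_mul, h0, mul_zero] at h2
    exact mul_ne_zero hI' hk h2.symm
  have hIdxP : Idx w' ε (shift ξ (map (Int.castRingHom ℝ) P)) := by
    intro J hJ
    by_contra hlt
    exact hJ (hcon J (by linarith))
  set e := ε - η with he
  have hee : ε ^ 2 ≤ ε := by nlinarith
  have he0 : ε / 2 ≤ e := by rw [he]; linarith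
  have hIdxW : Idx w' (∑ s : Fin l, max 0 (e - (s : ℕ) * (1 / d 0 : ℝ)))
      (shift ξ (map (Int.castRingHom ℝ) M.det)) := by
    rw [RingHom.map_det, AlgHom.map_det]
    apply Idx.det hw'0
    intro r s
    simp only [RingHom.mapMatrix_apply, AlgHom.mapMatrix_apply, Matrix.map_apply, hM, Matrix.of_apply]
    rcases le_total (e - (s : ℕ) * (1 / d 0 : ℝ)) 0 with h | h
    · rw [max_eq_left h]; exact Idx.of_nonneg hw'0 _
    · rw [max_eq_right h, map_hD, shift_hD]
      refine (hIdxP.hD _).mono ?_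
      rw [wt_cons]
      have hwi : wt (fun j : Fin m => w' j.succ) (i r) ≤ η := by
        have h1 : ∀ j : Fin m, w' j.succ ≤ η / d 0 := by
          intro j
          simp only [hw']
          rw [div_le_div_iff₀ (hdpos _) (hdpos _), one_mul]
          exact hdd 0 j.succ (Fin.succ_pos j)
        have h2 : wt (fun j : Fin m => w' j.succ) (i r) ≤ ∑ j, ((i r) j : ℝ) * (η / d 0) :=
          Finset.sum_le_sum fun j _ => mul_le_mul_of_nonneg_left (h1 j) (Nat.cast_nonneg _)
        rw [← Finset.sum_mul] at h2
        have h3 : ∑ j, ((i r) j : ℝ) ≤ d 0 := by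
          have h4 := hi r
          rw [Finsupp.degree_eq_sum] at h4
          have : ∑ j, (i r) j ≤ d 0 := by omega
          exact_mod_cast this
        calc _ ≤ _ := h2
          _ ≤ (d 0 : ℝ) * (η / d 0) := mul_le_mul_of_nonneg_right h3 (by positivity)
          _ = η := by field_simp
      simp only [hw'] at hwi ⊢
      linarith
  have hlow := hIdxW _ hne
  rw [wt_cons] at hlow
  have hlow2 := sum_lower l (d 0) e (by linarith) (by linarith) (by have := hd 0; omega) (hd 0)
  have hkw : (k : ℝ) * w' 0 ≤ 3 * η * l := by
    simp only [hw']
    rw [mul_one_div, div_le_iff₀ (hdpos 0)]; exact hkd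
  have hIw : wt (fun j : Fin m => w' j.succ) I' ≤ l * (ε ^ 2 / 100) := by
    have : wt (fun j : Fin m => w' j.succ) I' = l * wt (fun j => 1 / (((l * d j.succ : ℕ)) : ℝ)) I' := by
      simp only [wt, hw', Finset.mul_sum]
      apply Finset.sum_congr rfl
      intro j _
      push_cast
      have := hdpos j.succ
      field_simp
    rw [this]
    exact mul_le_mul_of_nonneg_left hI'w hl0.le
  have hfin : e ^ 2 * l / 8 ≤ l * (3 * η + ε ^ 2 / 100) := by linarith
  have hfin2 : e ^ 2 / 8 ≤ 3 * η + ε ^ 2 / 100 := by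
    have : l * (e ^ 2 / 8) ≤ l * (3 * η + ε ^ 2 / 100) := by linarith
    exact le_of_mul_le_mul_left this hl0
  nlinarith

theorem roth_lemma (m : ℕ) : ∀ ε : ℝ, 0 < ε → ε ≤ 1 → ∃ η : ℝ, 0 < η ∧ η ≤ 1 ∧ RothProp m ε η := by
  induction m with
  | zero =>
    intro ε hε hε1
    refine ⟨1, one_pos, le_rfl, ?_⟩
    intro d ξ L T P _ _ _ _ _ _ hP _ _
    refine ⟨0, by simp [wt]; exact hε.le, ?_⟩
    obtain ⟨c, rfl⟩ : ∃ c, P = C c := ⟨_, (eq_C_of_isEmpty P)⟩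
    have : c ≠ 0 := by rintro rfl; simp at hP
    have h2 : shift ξ (map (Int.castRingHom ℝ) (C c)) = C (c : ℝ) := by
      rw [map_C, shift, aeval_C]; rfl
    rw [h2, coeff_C, if_pos rfl]
    exact_mod_cast this
  | succ m ih =>
    intro ε hε hε1
    obtain ⟨η₁, h1, h2, h3⟩ := ih (ε ^ 2 / 100) (by positivity) (by nlinarith)
    refine ⟨_, ?_, ?_, roth_step m ε hε hε1 η₁ h1 h2 h3⟩
    · apply lt_min <;> positivity
    · refine (min_le_left _ _).trans (by linarith)

end RothCF
end

section
namespace RothCF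
open MvPolynomial

lemma pow_reduce (f : Polynomial ℤ) (α : ℝ) (hα : Polynomial.aeval α f = 0)
    (hδ : 1 ≤ f.natDegree) (C : ℝ)
    (hC : ∀ l, |(f.leadingCoeff : ℝ)| + |((f.coeff l : ℤ) : ℝ)| ≤ C) (n : ℕ) :
    ∃ c : ℕ → ℤ, (f.leadingCoeff : ℝ) ^ n * α ^ n = ∑ l ∈ Finset.range f.natDegree, (c l : ℝ) * α ^ l ∧
      ∀ l, |(c l : ℝ)| ≤ C ^ n := by
  have hC0 : 0 ≤ C := le_trans (by positivity) (hC 0)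
  induction n with
  | zero =>
    refine ⟨fun l => if l = 0 then 1 else 0, ?_, ?_⟩
    · rw [Finset.sum_eq_single 0]
      · simp
      · intro l _ hl; simp [hl]
      · intro h; exact absurd (Finset.mem_range.2 hδ) h
    · intro l; by_cases hl : l = 0 <;> simp [hl]
  | succ n ih =>
    obtain ⟨c, hc, hb⟩ := ih
    obtain ⟨D, hD⟩ : ∃ D, f.natDegree = D + 1 := ⟨f.natDegree - 1, by omega⟩
    have hroot : (f.leadingCoeff : ℝ) * α ^ (D + 1) = - ∑ l ∈ Finset.range (D + 1), ((f.coeff l : ℤ) : ℝ) * α ^ l := by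
      rw [Polynomial.aeval_eq_sum_range, hD, Finset.sum_range_succ] at hα
      simp only [zsmul_eq_mul] at hα
      have : f.leadingCoeff = f.coeff (D + 1) := by rw [Polynomial.leadingCoeff, hD]
      rw [this]
      linarith
    let c' : ℕ → ℤ := fun l => (if l = 0 then 0 else f.leadingCoeff * c (l - 1)) - c D * f.coeff l
    refine ⟨c', ?_, ?_⟩
    · rw [pow_succ, pow_succ, show (f.leadingCoeff : ℝ) ^ n * f.leadingCoeff * (α ^ n * α) =
        ((f.leadingCoeff : ℝ) ^ n * α ^ n) * (f.leadingCoeff * α) by ring, hc, hD, Finset.sum_range_succ,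
        add_mul]
      have h2 : (c D : ℝ) * α ^ D * (f.leadingCoeff * α) = c D * (f.leadingCoeff * α ^ (D + 1)) := by ring
      rw [h2, hroot]
      have h3 : ∑ l ∈ Finset.range (D + 1), (c' l : ℝ) * α ^ l =
        ∑ l ∈ Finset.range (D + 1), ((if l = 0 then 0 else f.leadingCoeff * c (l - 1) : ℤ) : ℝ) * α ^ l
          - ∑ l ∈ Finset.range (D + 1), (c D : ℝ) * (((f.coeff l : ℤ) : ℝ) * α ^ l) := by
        rw [← Finset.sum_sub_distrib]
        apply Finset.sum_congr rfl
        intro l _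
        simp only [c', Int.cast_sub, Int.cast_mul]
        ring
      have h4 : ∑ l ∈ Finset.range (D + 1), ((if l = 0 then 0 else f.leadingCoeff * c (l - 1) : ℤ) : ℝ) * α ^ l
          = ∑ l ∈ Finset.range D, ((f.leadingCoeff * c l : ℤ) : ℝ) * α ^ (l + 1) := by
        rw [Finset.sum_range_succ']; simp
      rw [h3, h4, ← Finset.mul_sum, Finset.sum_mul, mul_neg, sub_eq_add_neg]
      congr 1
      apply Finset.sum_congr rfl
      intro l _
      push_cast
      ring
    · intro l
      have h1 : |(((if l = 0 then 0 else f.leadingCoeff * c (l - 1) : ℤ)) : ℝ)| ≤ |(f.leadingCoeff : ℝ)| * C ^ n := by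
        split_ifs
        · simp; positivity
        · push_cast; rw [abs_mul]; exact mul_le_mul_of_nonneg_left (hb _) (abs_nonneg _)
      have h2 : |((c D * f.coeff l : ℤ) : ℝ)| ≤ C ^ n * |((f.coeff l : ℤ) : ℝ)| := by
        push_cast; rw [abs_mul]; exact mul_le_mul_of_nonneg_right (hb _) (abs_nonneg _)
      simp only [c']
      rw [Int.cast_sub]
      refine (abs_sub _ _).trans ?_
      rw [pow_succ]
      have := mul_le_mul_of_nonneg_left (hC l) (pow_nonneg hC0 n)
      nlinarith

lemma hD_monomial {σ : Type*} [Fintype σ] {R : Type*} [CommRing R] (i k : σ →₀ ℕ) (c : R) :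
    hD i (monomial k c) = monomial (k - i) (((∏ j, (k j).choose (i j) : ℕ) : R) * c) := by
  classical
  ext e
  rw [coeff_hD, coeff_monomial, coeff_monomial]
  by_cases h : k = e + i
  · subst h
    rw [if_pos rfl, if_pos (by simp)]
    simp [bin]
  · rw [if_neg h, mul_zero]
    by_cases h2 : k - i = e
    · rw [if_pos h2]
      have : ∃ j, k j < i j := by
        by_contra hh
        push Not at hh
        apply h
        ext j
        have := hh j
        rw [← h2]; simp; omega
      obtain ⟨j, hj⟩ := this
      rw [Finset.prod_eq_zero (Finset.mem_univ j) (Nat.choose_eq_zero_of_lt hj)]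
      simp
    · rw [if_neg h2]

lemma sum_exp_le (d : ℕ) (hd : 1 ≤ d) (s : ℝ) :
    ∑ i : Fin (d + 1), Real.exp (s * (1 / 2 - (i : ℕ) * (1 / d : ℝ))) ≤ (d + 1) * Real.exp (s ^ 2 / 8) := by
  have hd0 : (0 : ℝ) < d := by exact_mod_cast hd
  have hrev : ∑ i : Fin (d + 1), Real.exp (s * (1 / 2 - (i : ℕ) * (1 / d : ℝ))) =
      ∑ i : Fin (d + 1), Real.exp (-(s * (1 / 2 - (i : ℕ) * (1 / d : ℝ)))) := by
    rw [← Equiv.sum_comp Fin.revPerm]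
    apply Finset.sum_congr rfl
    intro i _
    congr 1
    have : ((Fin.revPerm i : Fin (d + 1)) : ℕ) = d - i := by simp [Fin.val_rev]
    rw [this, Nat.cast_sub (by have := i.2; omega)]
    field_simp
    ring
  have h2 : ∑ i : Fin (d + 1), Real.exp (s * (1 / 2 - (i : ℕ) * (1 / d : ℝ))) =
      ∑ i : Fin (d + 1), Real.cosh (s * (1 / 2 - (i : ℕ) * (1 / d : ℝ))) := by
    simp only [Real.cosh_eq]
    rw [← Finset.sum_div, Finset.sum_add_distrib, ← hrev]
    ring
  rw [h2]
  have h3 : ∀ i ∈ (Finset.univ : Finset (Fin (d + 1))),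
      Real.cosh (s * (1 / 2 - (i : ℕ) * (1 / d : ℝ))) ≤ Real.exp (s ^ 2 / 8) := by
    intro i _
    refine (Real.cosh_le_exp_half_sq _).trans (Real.exp_le_exp.2 ?_)
    have hi : ((i : ℕ) : ℝ) ≤ d := by exact_mod_cast Nat.lt_succ_iff.1 i.2
    have hx0 : 0 ≤ ((i : ℕ) : ℝ) * (1 / d) := by positivity
    have hx1 : ((i : ℕ) : ℝ) * (1 / d) ≤ 1 := by
      rw [mul_one_div, div_le_one hd0]; exact hi
    have : (1 / 2 - ((i : ℕ) : ℝ) * (1 / d)) ^ 2 ≤ 1 / 4 := by nlinarith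
    rw [mul_pow]
    have := mul_le_mul_of_nonneg_left this (sq_nonneg s)
    linarith
  refine (Finset.sum_le_sum h3).trans ?_
  simp

lemma count_le {m : ℕ} (d : Fin m → ℕ) (hd : ∀ j, 1 ≤ d j) (ε : ℝ) (hε : 0 < ε) :
    (((Finset.univ : Finset ((j : Fin m) → Fin (d j + 1))).filter
      (fun i => ∑ j, ((i j : ℕ) : ℝ) * (1 / d j) < m / 2 * (1 - ε))).card : ℝ) ≤
      (∏ j, ((d j : ℝ) + 1)) * Real.exp (-(m * ε ^ 2 / 2)) := by
  classical
  have h1 : (((Finset.univ : Finset ((j : Fin m) → Fin (d j + 1))).filter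
      (fun i => ∑ j, ((i j : ℕ) : ℝ) * (1 / d j) < m / 2 * (1 - ε))).card : ℝ) ≤
      ∑ i : (j : Fin m) → Fin (d j + 1), Real.exp (-(m * ε ^ 2)) *
        ∏ j, Real.exp ((2 * ε) * (1 / 2 - (i j : ℕ) * (1 / d j : ℝ))) := by
    rw [Finset.card_eq_sum_ones, Nat.cast_sum, Finset.sum_filter]
    apply Finset.sum_le_sum
    intro i _
    split_ifs with h
    · rw [← Real.exp_sum, ← Real.exp_add, Nat.cast_one, ← Finset.mul_sum, Finset.sum_sub_distrib]
      apply Real.one_le_exp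
      simp only [Finset.sum_const, Finset.card_univ, Fintype.card_fin, nsmul_eq_mul]
      nlinarith
    · positivity
  refine h1.trans ?_
  rw [← Finset.mul_sum]
  have h2 : ∑ i : (j : Fin m) → Fin (d j + 1), ∏ j, Real.exp ((2 * ε) * (1 / 2 - (i j : ℕ) * (1 / d j : ℝ)))
     = ∏ j, ∑ i : Fin (d j + 1), Real.exp ((2 * ε) * (1 / 2 - (i : ℕ) * (1 / d j : ℝ))) := by
    rw [Finset.prod_univ_sum, Fintype.piFinset_univ]
  rw [h2]
  have h3 : ∏ j, ∑ i : Fin (d j + 1), Real.exp ((2 * ε) * (1 / 2 - (i : ℕ) * (1 / d j : ℝ))) ≤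
     ∏ j, (((d j : ℝ) + 1) * Real.exp ((2 * ε) ^ 2 / 8)) :=
    Finset.prod_le_prod (fun _ _ => Finset.sum_nonneg fun _ _ => (Real.exp_pos _).le)
      (fun j _ => sum_exp_le (d j) (hd j) _)
  rw [Finset.prod_mul_distrib, Finset.prod_const, Finset.card_univ, Fintype.card_fin, ← Real.exp_nat_mul] at h3
  refine (mul_le_mul_of_nonneg_left h3 (Real.exp_pos _).le).trans ?_
  rw [mul_left_comm, ← Real.exp_add]
  apply mul_le_mul_of_nonneg_left _ (Finset.prod_nonneg fun _ _ => by positivity)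
  apply Real.exp_le_exp.2
  nlinarith

end RothCF
end

section
namespace RothCF
open MvPolynomial

/-- box exponents -/
noncomputable def toF {m : ℕ} {d : Fin m → ℕ} (k : (j : Fin m) → Fin (d j + 1)) : Fin m →₀ ℕ :=
  Finsupp.equivFunOnFinite.symm (fun j => (k j : ℕ))

lemma toF_apply {m : ℕ} {d : Fin m → ℕ} (k : (j : Fin m) → Fin (d j + 1)) (j : Fin m) :
    toF k j = k j := rfl

lemma toF_inj {m : ℕ} {d : Fin m → ℕ} : Function.Injective (toF (d := d)) := by
  intro k k' h
  funext j
  have := congrArg (fun g => g j) h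
  simp only [toF_apply] at this
  exact Fin.ext this

lemma siegel {r c : Type*} [Fintype r] [Fintype c] [DecidableEq c] [DecidableEq r] (M : Matrix r c ℤ) (B : ℝ) (hB : 1 ≤ B)
    (h : ∀ i k, |((M i k : ℤ) : ℝ)| ≤ B) (h1 : 0 < Fintype.card r)
    (h2 : 2 * Fintype.card r ≤ Fintype.card c) :
    ∃ t : c → ℤ, t ≠ 0 ∧ M.mulVec t = 0 ∧ ∀ k, |((t k : ℤ) : ℝ)| ≤ Fintype.card c * B := by
  obtain ⟨t, ht, hM, hn⟩ := Int.Matrix.exists_ne_zero_int_vec_norm_le M (by omega) h1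
  refine ⟨t, ht, hM, fun k => ?_⟩
  letI : SeminormedAddCommGroup (Matrix r c ℤ) := Matrix.seminormedAddCommGroup
  have hnB : max 1 ‖M‖ ≤ B := by
    apply max_le hB
    rw [Matrix.norm_le_iff (by linarith)]
    intro i j
    rw [Int.norm_eq_abs]; exact h i j
  have hk : ‖t k‖ ≤ ‖t‖ := norm_le_pi_norm t k
  rw [Int.norm_eq_abs] at hk
  refine (hk.trans hn).trans ?_
  have hc1 : (1 : ℝ) ≤ Fintype.card c := by
    have : 1 ≤ Fintype.card c := by omega
    exact_mod_cast this
  have hbase : (1 : ℝ) ≤ Fintype.card c * max 1 ‖M‖ := by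
    have := le_max_left 1 ‖M‖
    nlinarith
  have hexp : (Fintype.card r : ℝ) / (Fintype.card c - Fintype.card r) ≤ 1 := by
    have h3 : (2 : ℝ) * Fintype.card r ≤ Fintype.card c := by exact_mod_cast h2
    have h4 : (0 : ℝ) < Fintype.card r := by exact_mod_cast h1
    rw [div_le_one (by linarith)]
    linarith
  have := Real.rpow_le_rpow_of_exponent_le hbase hexp
  rw [Real.rpow_one] at this
  refine this.trans (mul_le_mul_of_nonneg_left hnB (by linarith))

theorem aux_poly (α : ℝ) (f : Polynomial ℤ) (hα : Polynomial.aeval α f = 0) (hδ : 1 ≤ f.natDegree) :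
    ∃ C1 : ℝ, 0 < C1 ∧ ∀ ε : ℝ, 0 < ε → ε < 1 → ∀ m : ℕ, 1 ≤ m →
      2 * (f.natDegree : ℝ) ≤ Real.exp (m * ε ^ 2 / 2) →
      ∀ d : Fin m → ℕ, (∀ j, 1 ≤ d j) → ∃ P : MvPolynomial (Fin m) ℤ, P ≠ 0 ∧
        (∀ j, degreeOf j P ≤ d j) ∧ Real.log (l1 P) ≤ C1 * ∑ j, (d j : ℝ) ∧
        ∀ I, wt (fun j => 1 / (d j : ℝ)) I < m / 2 * (1 - ε) →
          coeff I (shift (fun _ => α) (map (Int.castRingHom ℝ) P)) = 0 := by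
  classical
  set a := f.leadingCoeff with ha
  have ha0 : a ≠ 0 := by
    rw [ha, Polynomial.leadingCoeff_ne_zero]; rintro rfl; simp at hδ
  have ha1 : (1 : ℝ) ≤ |(a : ℝ)| := by exact_mod_cast Int.one_le_abs ha0
  set C0 : ℝ := |(a : ℝ)| + l1u f with hC0
  have hlu : ∀ l, |((f.coeff l : ℤ) : ℝ)| ≤ l1u f := by
    intro l
    by_cases h : l ∈ f.support
    · exact Finset.single_le_sum (f := fun k => |((f.coeff k : ℤ) : ℝ)|) (fun _ _ => abs_nonneg _) h
    · rw [Polynomial.notMem_support_iff] at h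
      rw [h]; simp [l1u]; exact Finset.sum_nonneg fun _ _ => abs_nonneg _
  have hC01 : 1 ≤ C0 := by have := (abs_nonneg _).trans (hlu 0); rw [hC0]; linarith
  choose c hc hcb using pow_reduce f α hα hδ C0 (fun l => by rw [hC0]; linarith [hlu l])
  set B0 : ℝ := 2 * |(a : ℝ)| * C0 with hB0
  have hB01 : 1 ≤ B0 := by rw [hB0]; nlinarith
  refine ⟨Real.log (4 * B0), Real.log_pos (by linarith), ?_⟩
  intro ε hε hε1 m hm hexp d hd
  set N := ∑ j, d j with hN
  set S := ((Finset.univ : Finset ((j : Fin m) → Fin (d j + 1))).filter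
      (fun i => ∑ j, ((i j : ℕ) : ℝ) * (1 / d j) < m / 2 * (1 - ε))) with hS
  let nn : ((j : Fin m) → Fin (d j + 1)) → ((j : Fin m) → Fin (d j + 1)) → ℕ :=
    fun i k => ∑ j, ((k j : ℕ) - (i j : ℕ))
  have hnn : ∀ i k, nn i k ≤ N := fun i k => Finset.sum_le_sum fun j _ => by
    have := (k j).2; omega
  let M : Matrix (S × Fin f.natDegree) ((j : Fin m) → Fin (d j + 1)) ℤ := fun il k =>
    ((∏ j, ((k j : ℕ)).choose (il.1.1 j : ℕ) : ℕ) : ℤ) * (a ^ (N - nn il.1.1 k) * c (nn il.1.1 k) il.2)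
  have hMb : ∀ i k, |((M i k : ℤ) : ℝ)| ≤ B0 ^ N := by
    intro i k
    simp only [M]
    push_cast
    rw [abs_mul, abs_mul, abs_pow, hB0, mul_pow, mul_pow, mul_assoc]
    apply mul_le_mul
    · rw [abs_of_nonneg (by positivity), ← Finset.prod_pow_eq_pow_sum]
      apply Finset.prod_le_prod (fun _ _ => by positivity)
      intro j _
      have : ((k j : ℕ)).choose (i.1.1 j : ℕ) ≤ 2 ^ d j :=
        (Nat.choose_le_two_pow _ _).trans (Nat.pow_le_pow_right (by norm_num) (Nat.lt_succ_iff.1 (k j).2))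
      exact_mod_cast this
    · apply mul_le_mul
      · exact pow_le_pow_right₀ ha1 (Nat.sub_le _ _)
      · exact (hcb _ _).trans (pow_le_pow_right₀ hC01 (hnn _ _))
      · positivity
      · positivity
    · positivity
    · positivity
  have hcardc : (Fintype.card ((j : Fin m) → Fin (d j + 1)) : ℝ) = ∏ j, ((d j : ℝ) + 1) := by
    rw [Fintype.card_pi]; push_cast; simp
  have hcount := count_le d hd ε hε
  rw [← hS, ← hcardc] at hcount
  have hrows : Fintype.card (S × Fin f.natDegree) = S.card * f.natDegree := by
    rw [Fintype.card_prod, Fintype.card_coe, Fintype.card_fin]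
  have h2 : 2 * Fintype.card (S × Fin f.natDegree) ≤ Fintype.card ((j : Fin m) → Fin (d j + 1)) := by
    rw [hrows]
    have : (2 : ℝ) * (S.card * f.natDegree) ≤ Fintype.card ((j : Fin m) → Fin (d j + 1)) := by
      calc (2 : ℝ) * (S.card * f.natDegree) = S.card * (2 * f.natDegree) := by ring
        _ ≤ (Fintype.card ((j : Fin m) → Fin (d j + 1)) * Real.exp (-(m * ε ^ 2 / 2))) * Real.exp (m * ε ^ 2 / 2) :=
          mul_le_mul hcount hexp (by positivity) (by positivity)
        _ = _ := by rw [mul_assoc, ← Real.exp_add]; simp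
    exact_mod_cast this
  have h1 : 0 < Fintype.card (S × Fin f.natDegree) := by
    rw [hrows]
    apply Nat.mul_pos _ hδ
    rw [Finset.card_pos]
    refine ⟨fun _ => 0, ?_⟩
    rw [hS, Finset.mem_filter]
    refine ⟨Finset.mem_univ _, ?_⟩
    simp
    have : (1 : ℝ) ≤ m := by exact_mod_cast hm
    nlinarith
  obtain ⟨t, ht0, htM, htb⟩ := siegel M (B0 ^ N) (one_le_pow₀ hB01) hMb h1 h2
  let P : MvPolynomial (Fin m) ℤ := ∑ k : (j : Fin m) → Fin (d j + 1), monomial (toF k) (t k)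
  have hPc : ∀ k, coeff (toF k) P = t k := by
    intro k
    simp only [P, coeff_sum, coeff_monomial]
    rw [Finset.sum_eq_single k]
    · simp
    · intro k' _ hk'; rw [if_neg]; intro h; exact hk' (toF_inj h)
    · simp
  have hP0 : P ≠ 0 := by
    intro h0; apply ht0; funext k; rw [← hPc, h0]; simp
  have hcardN : (Fintype.card ((j : Fin m) → Fin (d j + 1)) : ℝ) ≤ 2 ^ N := by
    rw [hcardc, hN, ← Finset.prod_pow_eq_pow_sum]
    apply Finset.prod_le_prod (fun _ _ => by positivity)
    intro j _
    have : d j + 1 ≤ 2 ^ d j := Nat.lt_two_pow_self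
    exact_mod_cast this
  refine ⟨P, hP0, ?_, ?_, ?_⟩
  · intro j
    rw [degreeOf_le_iff]
    intro I hI
    rw [mem_support_iff] at hI
    simp only [P, coeff_sum] at hI
    obtain ⟨k, _, hk⟩ := Finset.exists_ne_zero_of_sum_ne_zero hI
    rw [coeff_monomial] at hk
    have : toF k = I := by by_contra h; rw [if_neg h] at hk; exact hk rfl
    rw [← this, toF_apply]
    exact Nat.lt_succ_iff.1 (k j).2
  · have h3 : l1 P ≤ (4 * B0) ^ N := by
      calc l1 P ≤ ∑ k, l1 (monomial (toF k) (t k)) := l1_sum _ _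
        _ ≤ ∑ k : (j : Fin m) → Fin (d j + 1), (Fintype.card ((j : Fin m) → Fin (d j + 1)) : ℝ) * B0 ^ N :=
          Finset.sum_le_sum fun k _ => by rw [l1_monomial]; exact htb k
        _ = Fintype.card ((j : Fin m) → Fin (d j + 1)) * (Fintype.card ((j : Fin m) → Fin (d j + 1)) * B0 ^ N) := by
          rw [Finset.sum_const, Finset.card_univ, nsmul_eq_mul]
        _ ≤ 2 ^ N * (2 ^ N * B0 ^ N) := by gcongr
        _ = _ := by rw [← mul_pow, ← mul_pow]; congr 1; ring
    have h4 := Real.log_le_log (by linarith [one_le_l1 hP0]) h3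
    rw [Real.log_pow, mul_comm] at h4
    rw [hN] at h4
    push_cast at h4
    exact h4
  · intro I hI
    rw [coeff_shift]
    have hexpand : eval (fun _ => α) (hD I (map (Int.castRingHom ℝ) P)) =
        ∑ k : (j : Fin m) → Fin (d j + 1),
          ((∏ j, ((k j : ℕ)).choose (I j) : ℕ) : ℝ) * (t k : ℝ) * α ^ (∑ j, ((k j : ℕ) - I j)) := by
      simp only [P, map_sum, map_monomial, hD_monomial]
      apply Finset.sum_congr rfl
      intro k _
      rw [eval_monomial, Finsupp.prod_fintype _ _ (by simp), Finset.prod_pow_eq_pow_sum]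
      simp [toF_apply]
    rw [hexpand]
    by_cases hbox : ∀ j, I j ≤ d j
    · let i : (j : Fin m) → Fin (d j + 1) := fun j => ⟨I j, Nat.lt_succ_iff.2 (hbox j)⟩
      have hiS : i ∈ S := by
        rw [hS, Finset.mem_filter]
        exact ⟨Finset.mem_univ _, hI⟩
      have hmul : (a : ℝ) ^ N * ∑ k : (j : Fin m) → Fin (d j + 1),
          ((∏ j, ((k j : ℕ)).choose (I j) : ℕ) : ℝ) * (t k : ℝ) * α ^ (∑ j, ((k j : ℕ) - I j)) = 0 := by
        have hterm : ∀ k : (j : Fin m) → Fin (d j + 1), (a : ℝ) ^ N *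
          (((∏ j, ((k j : ℕ)).choose (I j) : ℕ) : ℝ) * (t k : ℝ) * α ^ (∑ j, ((k j : ℕ) - I j)))
            = ∑ l : Fin f.natDegree, α ^ (l : ℕ) * ((M (⟨i, hiS⟩, l) k : ℝ) * t k) := by
          intro k
          have e1 : (a : ℝ) ^ N * α ^ (nn i k) = (a : ℝ) ^ (N - nn i k) * ∑ l : Fin f.natDegree, (c (nn i k) l : ℝ) * α ^ (l : ℕ) := by
            rw [Fin.sum_univ_eq_sum_range (fun l => (c (nn i k) l : ℝ) * α ^ l), ← hc, ← mul_assoc,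
              ← pow_add, Nat.sub_add_cancel (hnn i k)]
          calc _ = ((∏ j, ((k j : ℕ)).choose (I j) : ℕ) : ℝ) * (t k : ℝ) * ((a : ℝ) ^ N * α ^ (nn i k)) := by
                simp only [nn, i]; ring
            _ = _ := by
                rw [e1, Finset.mul_sum, Finset.mul_sum]
                apply Finset.sum_congr rfl
                intro l _
                simp only [M, i]
                push_cast
                ring
        rw [Finset.mul_sum, Finset.sum_congr rfl (fun k _ => hterm k), Finset.sum_comm]
        apply Finset.sum_eq_zero
        intro l _
        rw [← Finset.mul_sum]
        have := congrFun htM (⟨i, hiS⟩, l)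
        simp only [Matrix.mulVec, dotProduct, Pi.zero_apply] at this
        have h5 : ∑ k, (M (⟨i, hiS⟩, l) k : ℝ) * (t k : ℝ) = 0 := by exact_mod_cast this
        rw [h5, mul_zero]
      rcases mul_eq_zero.1 hmul with h | h
      · exact absurd h (pow_ne_zero _ (by exact_mod_cast ha0))
      · exact h
    · push Not at hbox
      obtain ⟨j, hj⟩ := hbox
      apply Finset.sum_eq_zero
      intro k _
      rw [Finset.prod_eq_zero (Finset.mem_univ j) (Nat.choose_eq_zero_of_lt (by
        have := (k j).2; omega))]
      simp

end RothCF
end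

section
namespace RothCF
open MvPolynomial

lemma not_sq (a : ℕ) (ha : 1 ≤ a) (u v : ℤ) (h : u ^ 2 + a * u * v - v ^ 2 = 0) : v = 0 := by
  by_contra hv
  have h1 : (2 * u + a * v) ^ 2 = (a ^ 2 + 4) * v ^ 2 := by linear_combination 4 * h
  have h2 : v ^ 2 ∣ (2 * u + a * v) ^ 2 := ⟨a ^ 2 + 4, by rw [h1]; ring⟩
  rw [Int.pow_dvd_pow_iff (by norm_num)] at h2
  obtain ⟨s, hs⟩ := h2
  rw [hs] at h1
  have h3 : s ^ 2 = a ^ 2 + 4 := by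
    have h4 : v ^ 2 * s ^ 2 = v ^ 2 * (a ^ 2 + 4) := by linear_combination h1
    exact mul_left_cancel₀ (pow_ne_zero 2 hv) h4
  have h5 : |s| ^ 2 = (a : ℤ) ^ 2 + 4 := by rw [sq_abs]; exact h3
  have ha' : (1 : ℤ) ≤ a := by exact_mod_cast ha
  have h6 : (a : ℤ) < |s| := by
    by_contra h; have := abs_nonneg s; nlinarith
  rcases (Int.add_one_le_iff.2 h6).eq_or_lt with h7 | h7
  · rw [← h7] at h5
    have : (2 : ℤ) * a = 3 := by linarith
    omega
  · have h8 : (a : ℤ) + 2 ≤ |s| := by omega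
    nlinarith

/-- the order `ℤ[ω]` embedded in `ℝ × ℝ` -/
def ordS (a : ℕ) (ω ω' : ℝ) (h1 : ω ^ 2 = a * ω + 1) (h2 : ω' ^ 2 = a * ω' + 1) : Subring (ℝ × ℝ) where
  carrier := {z | ∃ u v : ℤ, z = ((u : ℝ) + v * ω, (u : ℝ) + v * ω')}
  mul_mem' := by
    rintro _ _ ⟨u, v, rfl⟩ ⟨u', v', rfl⟩
    refine ⟨u * u' + v * v', u * v' + v * u' + a * v * v', ?_⟩
    ext
    · push_cast; simp only [Prod.mk_mul_mk]; linear_combination (v * v' : ℝ) * h1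
    · push_cast; simp only [Prod.mk_mul_mk]; linear_combination (v * v' : ℝ) * h2
  one_mem' := ⟨1, 0, by simp; rfl⟩
  add_mem' := by
    rintro _ _ ⟨u, v, rfl⟩ ⟨u', v', rfl⟩
    refine ⟨u + u', v + v', ?_⟩
    ext
    · push_cast; simp only [Prod.mk_add_mk]; ring
    · push_cast; simp only [Prod.mk_add_mk]; ring
  zero_mem' := ⟨0, 0, by simp; rfl⟩
  neg_mem' := by
    rintro _ ⟨u, v, rfl⟩
    refine ⟨-u, -v, ?_⟩
    ext
    · push_cast; simp only [Prod.neg_mk]; ring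
    · push_cast; simp only [Prod.neg_mk]; ring

lemma norm_ge (a : ℕ) (ha : 1 ≤ a) (ω ω' : ℝ) (h1 : ω ^ 2 = a * ω + 1) (h2 : ω' ^ 2 = a * ω' + 1)
    (hs : ω + ω' = a) (hp : ω * ω' = -1) (z : ℝ × ℝ) (hz : z ∈ ordS a ω ω' h1 h2) (hz0 : z.1 ≠ 0) :
    1 ≤ |z.1| * |z.2| := by
  obtain ⟨u, v, rfl⟩ := hz
  simp only at hz0 ⊢
  have hN : ((u : ℝ) + v * ω) * (u + v * ω') = ((u ^ 2 + a * u * v - v ^ 2 : ℤ) : ℝ) := by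
    push_cast
    linear_combination (u * v : ℝ) * hs + (v : ℝ) ^ 2 * hp
  rw [← abs_mul, hN]
  have : u ^ 2 + a * u * v - v ^ 2 ≠ 0 := by
    intro h0
    have hv := not_sq a ha u v h0
    subst hv
    have hu : u = 0 := by simpa using h0
    subst hu
    simp at hz0
  exact_mod_cast Int.one_le_abs this

lemma eval_shift {m : ℕ} (x z : Fin m → ℝ) (f : MvPolynomial (Fin m) ℝ) :
    eval z (shift x f) = eval (fun j => z j + x j) f := by
  rw [shift]
  have : (aeval z).comp (aeval (fun j => (X j + C (x j) : MvPolynomial (Fin m) ℝ))) =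
    (aeval (fun j => z j + x j) : MvPolynomial (Fin m) ℝ →ₐ[ℝ] ℝ) := by
    apply MvPolynomial.algHom_ext
    intro j
    simp
  have h := congrArg (fun g => g f) this
  simpa [MvPolynomial.aeval_eq_eval] using h

lemma eval_homog {m : ℕ} (d : Fin m → ℕ) (x y : Fin m → ℝ) (hx : ∀ j, x j ≠ 0)
    (g : MvPolynomial (Fin m) ℝ) (hg : ∀ i ∈ g.support, ∀ j, i j ≤ d j) :
    (∏ j, x j ^ d j) * eval (fun j => y j / x j) g =
      ∑ i ∈ g.support, coeff i g * ∏ j, (x j ^ (d j - i j) * y j ^ i j) := by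
  rw [eval_eq', Finset.mul_sum]
  apply Finset.sum_congr rfl
  intro i hi
  rw [mul_left_comm, ← Finset.prod_mul_distrib]
  congr 1
  apply Finset.prod_congr rfl
  intro j _
  have := hg i hi j
  rw [div_pow]
  conv_lhs => rw [← Nat.sub_add_cancel this, pow_add]
  have := pow_ne_zero (i j) (hx j)
  field_simp

lemma card_supp {m : ℕ} (d : Fin m → ℕ) (g : MvPolynomial (Fin m) ℝ)
    (hg : ∀ i ∈ g.support, ∀ j, i j ≤ d j) : (g.support.card : ℝ) ≤ 2 ^ (∑ j, d j) := by
  classical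
  have h1 : g.support ⊆ Finset.univ.image (toF (d := d)) := by
    intro i hi
    rw [Finset.mem_image]
    exact ⟨fun j => ⟨i j, Nat.lt_succ_iff.2 (hg i hi j)⟩, Finset.mem_univ _, by ext j; rfl⟩
  have h2 := (Finset.card_le_card h1).trans Finset.card_image_le
  rw [Finset.card_univ, Fintype.card_pi] at h2
  have h3 : ∏ j, Fintype.card (Fin (d j + 1)) ≤ 2 ^ (∑ j, d j) := by
    rw [← Finset.prod_pow_eq_pow_sum]
    apply Finset.prod_le_prod'
    intro j _
    rw [Fintype.card_fin]
    exact Nat.lt_two_pow_self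
  exact_mod_cast h2.trans h3

lemma place_bound {m : ℕ} (d : Fin m → ℕ) (hd : ∀ j, 1 ≤ d j) (x y L : Fin m → ℝ) (hx : ∀ j, x j ≠ 0)
    (g : MvPolynomial (Fin m) ℝ) (hg : ∀ i ∈ g.support, ∀ j, i j ≤ d j)
    (B C ρ D E τ : ℝ) (hB : ∀ i, |coeff i g| ≤ B) (hC : 1 ≤ C) (hρ : 0 ≤ ρ) (hD : 0 ≤ D)
    (hxb : ∀ j, |x j| ≤ C * Real.exp (L j)) (hyb : ∀ j, |y j| ≤ C * Real.exp (-ρ * L j))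
    (hD1 : ∀ j, D ≤ d j * L j) (hD2 : ∀ j, d j * L j ≤ D + E)
    (hidx : Idx (fun j => 1 / (d j : ℝ)) τ g) :
    |(∏ j, x j ^ d j) * eval (fun j => y j / x j) g| ≤
      2 ^ (∑ j, d j) * (B * (C ^ (∑ j, d j) * Real.exp (m * (D + E) - (1 + ρ) * D * τ))) := by
  rw [eval_homog d x y hx g hg]
  have hB0 : 0 ≤ B := (abs_nonneg _).trans (hB 0)
  refine (Finset.abs_sum_le_sum_abs _ _).trans ?_
  have key : ∀ i ∈ g.support, |coeff i g * ∏ j, (x j ^ (d j - i j) * y j ^ i j)| ≤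
      B * (C ^ (∑ j, d j) * Real.exp (m * (D + E) - (1 + ρ) * D * τ)) := by
    intro i hi
    rw [abs_mul]
    apply mul_le_mul (hB i) _ (abs_nonneg _) hB0
    rw [Finset.abs_prod]
    have h1 : ∀ j ∈ (Finset.univ : Finset (Fin m)), |x j ^ (d j - i j) * y j ^ i j| ≤
        C ^ d j * Real.exp (d j * L j - (1 + ρ) * (i j * L j)) := by
      intro j _
      have hij := hg i hi j
      rw [abs_mul, abs_pow, abs_pow]
      have e1 := pow_le_pow_left₀ (abs_nonneg _) (hxb j) (d j - i j)
      have e2 := pow_le_pow_left₀ (abs_nonneg _) (hyb j) (i j)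
      refine (mul_le_mul e1 e2 (by positivity) (by positivity)).trans (le_of_eq ?_)
      rw [mul_pow, mul_pow, ← Real.exp_nat_mul, ← Real.exp_nat_mul, Nat.cast_sub hij]
      rw [show C ^ (d j - i j) * Real.exp (((d j : ℝ) - i j) * L j) * (C ^ i j * Real.exp ((i j : ℝ) * (-ρ * L j)))
        = (C ^ (d j - i j) * C ^ i j) * (Real.exp (((d j : ℝ) - i j) * L j) * Real.exp ((i j : ℝ) * (-ρ * L j))) by ring,
        ← pow_add, Nat.sub_add_cancel hij, ← Real.exp_add]
      congr 2
      ring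
    refine (Finset.prod_le_prod (fun _ _ => abs_nonneg _) h1).trans ?_
    rw [Finset.prod_mul_distrib, Finset.prod_pow_eq_pow_sum, ← Real.exp_sum]
    apply mul_le_mul_of_nonneg_left _ (by positivity)
    apply Real.exp_le_exp.2
    rw [Finset.sum_sub_distrib, ← Finset.mul_sum]
    have h2 : ∑ j, (d j : ℝ) * L j ≤ m * (D + E) := by
      refine (Finset.sum_le_sum fun j _ => hD2 j).trans (le_of_eq ?_)
      rw [Finset.sum_const, Finset.card_univ, Fintype.card_fin, nsmul_eq_mul]
    have h3 : D * τ ≤ ∑ j, (i j : ℝ) * L j := by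
      have h4 := hidx i (mem_support_iff.1 hi)
      refine (mul_le_mul_of_nonneg_left h4 hD).trans ?_
      rw [wt, Finset.mul_sum]
      apply Finset.sum_le_sum
      intro j _
      have hdj : (0 : ℝ) < d j := by exact_mod_cast hd j
      have h5 := mul_le_mul_of_nonneg_right (hD1 j) (show 0 ≤ (i j : ℝ) * (1 / d j) by positivity)
      refine h5.trans (le_of_eq ?_)
      field_simp
    have := mul_le_mul_of_nonneg_left h3 (show 0 ≤ 1 + ρ by linarith)
    linarith
  refine (Finset.sum_le_sum key).trans ?_
  rw [Finset.sum_const, nsmul_eq_mul]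
  apply mul_le_mul_of_nonneg_right (card_supp d g hg)
  positivity

lemma eval_le_l1 {m : ℕ} (d : Fin m → ℕ) (Q : MvPolynomial (Fin m) ℤ) (hQ : ∀ j, degreeOf j Q ≤ d j)
    (α A : ℝ) (hA : 1 ≤ A) (hα : |α| ≤ A) :
    |eval (fun _ => α) (map (Int.castRingHom ℝ) Q)| ≤ l1 Q * A ^ (∑ j, d j) := by
  rw [eval_map, eval₂_eq', l1, Finset.sum_mul]
  refine (Finset.abs_sum_le_sum_abs _ _).trans (Finset.sum_le_sum fun i hi => ?_)
  rw [abs_mul]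
  simp only [eq_intCast]
  apply mul_le_mul_of_nonneg_left _ (abs_nonneg _)
  rw [Finset.prod_pow_eq_pow_sum, abs_pow]
  refine (pow_le_pow_left₀ (abs_nonneg _) hα _).trans (pow_le_pow_right₀ hA ?_)
  exact Finset.sum_le_sum fun j _ => degreeOf_le_iff.1 (hQ j) i hi

end RothCF
end

section
namespace RothCF
open MvPolynomial

/-- Approximation data. -/
structure App (a : ℕ) (ω ω' α κ C : ℝ) where
  q : ℤ
  q' : ℤ
  p : ℤ
  p' : ℤ
  L : ℝ
  x0 : q * ω + q' ≠ 0
  x0' : q * ω' + q' ≠ 0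
  xb : |q * ω + q'| ≤ C * Real.exp L
  xb' : |q * ω' + q'| ≤ C * Real.exp L
  yb : |(p * ω + p') - α * (q * ω + q')| ≤ C * Real.exp (-(1 + 2 * κ) * L)
  yb' : |(p * ω' + p') - α * (q * ω' + q')| ≤ C * Real.exp (-1 * L)
  star : Star ((p * ω + p') / (q * ω + q')) L

lemma core {m : ℕ} (hm : 1 ≤ m) (a : ℕ) (ha : 1 ≤ a) (ω ω' α κ C : ℝ) (hs : ω + ω' = a) (hp : ω * ω' = -1)
    (hκ : 0 < κ) (hC : 1 ≤ C)
    (d : Fin m → ℕ) (hd : ∀ j, 1 ≤ d j) (P : MvPolynomial (Fin m) ℤ) (hdeg : ∀ j, degreeOf j P ≤ d j)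
    (Ap : Fin m → App a ω ω' α κ C) (τ σ D E A C1 : ℝ)
    (hidx : Idx (fun j => 1 / (d j : ℝ)) τ (shift (fun _ => α) (map (Int.castRingHom ℝ) P)))
    (I : Fin m →₀ ℕ) (hI : wt (fun j => 1 / (d j : ℝ)) I ≤ σ)
    (hIne : coeff I (shift (fun j => (((Ap j).p * ω + (Ap j).p') / ((Ap j).q * ω + (Ap j).q'))) (map (Int.castRingHom ℝ) P)) ≠ 0)
    (hA : 1 ≤ A) (hαA : |α| ≤ A) (hD0 : 0 ≤ D)
    (hD1 : ∀ j, D ≤ d j * (Ap j).L) (hD2 : ∀ j, d j * (Ap j).L ≤ D + E)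
    (hl1 : l1 P ≤ Real.exp (C1 * (∑ j, (d j : ℝ)))) :
    0 ≤ 2 * (Real.log (8 * A * C) + C1) * (∑ j, (d j : ℝ)) + 2 * m * (D + E) - (4 + 2 * κ) * D * (τ - σ) := by
  classical
  have h1 : ω ^ 2 = a * ω + 1 := by linear_combination ω * hs - hp
  have h2 : ω' ^ 2 = a * ω' + 1 := by linear_combination ω' * hs - hp
  set N := ∑ j, d j with hN
  have hNr : (∑ j, (d j : ℝ)) = N := by rw [hN]; push_cast; rfl
  set Q := hD I P with hQ
  have hQdeg : ∀ j, degreeOf j Q ≤ d j := fun j => (degreeOf_hD _ _ _).trans (hdeg j)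
  set g := shift (fun _ => α) (map (Int.castRingHom ℝ) Q) with hg
  have hgidx : Idx (fun j => 1 / (d j : ℝ)) (τ - σ) g := by
    rw [hg, hQ, map_hD, shift_hD]
    exact (hidx.hD I).mono (by linarith)
  have hgc : ∀ i, coeff i g = eval (fun _ => α) (map (Int.castRingHom ℝ) (hD i Q)) := by
    intro i; rw [hg, coeff_shift, map_hD _ i Q]
  have hgsupp : ∀ i ∈ g.support, ∀ j, i j ≤ d j := by
    intro i hi j
    by_contra hlt
    rw [mem_support_iff, hgc] at hi
    apply hi
    have : hD i Q = 0 := by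
      ext e
      rw [coeff_hD, coeff_zero]
      have : coeff (e + i) Q = 0 := by
        by_contra h
        have := degreeOf_le_iff.1 (hQdeg j) _ (mem_support_iff.2 h)
        simp at this
        omega
      rw [this, mul_zero]
    rw [this]; simp
  set B : ℝ := 2 ^ N * (2 ^ N * l1 P) * A ^ N with hB
  have hgB : ∀ i, |coeff i g| ≤ B := by
    intro i
    rw [hgc]
    refine (eval_le_l1 d (hD i Q) (fun j => (degreeOf_hD _ _ _).trans (hQdeg j)) α A hA hαA).trans ?_
    rw [hB]
    apply mul_le_mul_of_nonneg_right _ (by positivity)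
    refine (l1_hD i Q d hQdeg).trans ?_
    exact mul_le_mul_of_nonneg_left (l1_hD I P d hdeg) (by positivity)
  let x : Fin m → ℝ := fun j => (Ap j).q * ω + (Ap j).q'
  let y : Fin m → ℝ := fun j => (Ap j).p * ω + (Ap j).p'
  let x' : Fin m → ℝ := fun j => (Ap j).q * ω' + (Ap j).q'
  let y' : Fin m → ℝ := fun j => (Ap j).p * ω' + (Ap j).p'
  have hx : ∀ j, x j ≠ 0 := fun j => (Ap j).x0
  have hx' : ∀ j, x' j ≠ 0 := fun j => (Ap j).x0'
  set QR := map (Int.castRingHom ℝ) Q with hQR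
  have hev : ∀ (u v : Fin m → ℝ), (∀ j, u j ≠ 0) → eval (fun j => (v j - α * u j) / u j) g = eval (fun j => v j / u j) QR := by
    intro u v hu
    rw [hg, eval_shift]
    congr 2
    funext j
    have := hu j
    field_simp
    ring
  have b1 := place_bound d hd x (fun j => y j - α * x j) (fun j => (Ap j).L) hx g hgsupp B C (1 + 2 * κ) D E (τ - σ)
    hgB hC (by linarith) hD0 (fun j => (Ap j).xb) (fun j => (Ap j).yb) hD1 hD2 hgidx
  have b2 := place_bound d hd x' (fun j => y' j - α * x' j) (fun j => (Ap j).L) hx' g hgsupp B C 1 D E (τ - σ)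
    hgB hC (by linarith) hD0 (fun j => (Ap j).xb') (fun j => (Ap j).yb') hD1 hD2 hgidx
  rw [hev x y hx] at b1
  rw [hev x' y' hx'] at b2
  have hQRsupp : ∀ i ∈ QR.support, ∀ j, i j ≤ d j := by
    intro i hi j
    exact degreeOf_le_iff.1 (hQdeg j) i (support_map_subset _ _ hi)
  let z : ℝ × ℝ := ((∏ j, x j ^ d j) * eval (fun j => y j / x j) QR, (∏ j, x' j ^ d j) * eval (fun j => y' j / x' j) QR)
  have hz : z ∈ ordS a ω ω' h1 h2 := by
    have hzz : z = ∑ i ∈ QR.support, ((coeff i Q : ℤ) : ℝ × ℝ) * ∏ j, (((x j, x' j) : ℝ × ℝ) ^ (d j - i j) * ((y j, y' j) : ℝ × ℝ) ^ i j) := by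
      simp only [z]
      rw [eval_homog d x y hx QR hQRsupp, eval_homog d x' y' hx' QR hQRsupp]
      ext
      · simp [Prod.fst_sum, Prod.fst_prod, hQR, coeff_map]
      · simp [Prod.snd_sum, Prod.snd_prod, hQR, coeff_map]
    rw [hzz]
    refine Subring.sum_mem _ fun i _ => Subring.mul_mem _ (intCast_mem _ _) (Subring.prod_mem _ fun j _ => ?_)
    refine Subring.mul_mem _ (Subring.pow_mem _ ?_ _) (Subring.pow_mem _ ?_ _)
    · exact ⟨(Ap j).q', (Ap j).q, by simp only [x, x']; ext <;> simp [add_comm]⟩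
    · exact ⟨(Ap j).p', (Ap j).p, by simp only [y, y']; ext <;> simp [add_comm]⟩
  have hz0 : z.1 ≠ 0 := by
    simp only [z]
    apply mul_ne_zero
    · exact Finset.prod_ne_zero_iff.2 fun j _ => pow_ne_zero _ (hx j)
    · rw [coeff_shift] at hIne
      rw [hQR, hQ, map_hD]
      exact hIne
  have hfin := norm_ge a ha ω ω' h1 h2 hs hp z hz hz0
  have hmul := mul_le_mul b1 b2 (abs_nonneg _) ((abs_nonneg _).trans b1)
  have hall := hfin.trans hmul
  rw [← hN] at hall
  have hl1P : B ≤ (4 * A) ^ N * Real.exp (C1 * N) := by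
    rw [hB, ← hNr]
    calc (2 : ℝ) ^ N * (2 ^ N * l1 P) * A ^ N = (4 * A) ^ N * l1 P := by
          rw [mul_pow, show (4 : ℝ) = 2 * 2 by norm_num, mul_pow]; ring
      _ ≤ _ := mul_le_mul_of_nonneg_left hl1 (by positivity)
  have hrw : ∀ e : ℝ, (2 : ℝ) ^ N * (B * (C ^ N * Real.exp e)) ≤ Real.exp ((Real.log (8 * A * C) + C1) * N + e) := by
    intro e
    have hpos : 0 < 8 * A * C := by positivity
    rw [Real.exp_add, add_mul, Real.exp_add, mul_comm (Real.log _), Real.exp_nat_mul, Real.exp_log hpos]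
    calc (2 : ℝ) ^ N * (B * (C ^ N * Real.exp e)) ≤ 2 ^ N * (((4 * A) ^ N * Real.exp (C1 * N)) * (C ^ N * Real.exp e)) := by
          gcongr
      _ = _ := by
          rw [show (8 : ℝ) * A * C = 2 * (4 * A) * C by ring, mul_pow (2 * (4 * A)) C, mul_pow (2 : ℝ) (4 * A)]; ring
  have hall2 := hall.trans (mul_le_mul (hrw _) (hrw _) (by
    have : 0 ≤ B := (abs_nonneg _).trans (hgB 0)
    positivity) (Real.exp_pos _).le)
  rw [← Real.exp_add, Real.one_le_exp_iff] at hall2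
  rw [hNr]
  refine hall2.trans (le_of_eq ?_)
  ring

end RothCF
end

section
namespace RothCF
open MvPolynomial

lemma build_seq {a : ℕ} {ω ω' α κ C : ℝ} (happ : ∀ H : ℝ, ∃ A : App a ω ω' α κ C, H ≤ A.L)
    (m : ℕ) (η H0 : ℝ) (hη0 : 0 < η) (hη1 : η ≤ 1) (hH1 : 1 ≤ H0) :
    ∃ Ap : Fin m → App a ω ω' α κ C, (∀ j, H0 ≤ (Ap j).L) ∧
      ∀ j k : Fin m, j < k → 2 / η * (Ap k).L ≤ (Ap j).L := by
  choose F hF using happ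
  let Hs : ℕ → ℝ := fun n => Nat.rec H0 (fun _ h => 2 / η * (F h).L) n
  let Ls : ℕ → ℝ := fun n => (F (Hs n)).L
  have hHs0 : Hs 0 = H0 := rfl
  have hHs1 : ∀ n, Hs (n + 1) = 2 / η * Ls n := fun n => rfl
  have hLH : ∀ n, Hs n ≤ Ls n := fun n => hF _
  have h2η : 2 ≤ 2 / η := by rw [le_div_iff₀ hη0]; linarith
  have hL0 : ∀ n, H0 ≤ Ls n := by
    intro n
    induction n with
    | zero => rw [← hHs0]; exact hLH 0
    | succ n ih =>
      have := hLH (n + 1)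
      rw [hHs1] at this
      nlinarith
  have hLpos : ∀ n, 0 < Ls n := fun n => by linarith [hL0 n]
  have hLstep : ∀ n, 2 / η * Ls n ≤ Ls (n + 1) := fun n => by rw [← hHs1]; exact hLH (n + 1)
  have hLmono : Monotone Ls := monotone_nat_of_le_succ fun n => by nlinarith [hLstep n, hLpos n]
  have hLlt : ∀ n n', n < n' → 2 / η * Ls n ≤ Ls n' := fun n n' h => (hLstep n).trans (hLmono h)
  let Ap : Fin m → App a ω ω' α κ C := fun j => F (Hs (Fin.rev j : Fin m))
  refine ⟨Ap, fun j => hL0 _, fun j k hjk => ?_⟩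
  apply hLlt
  exact Fin.rev_lt_rev.2 hjk

lemma scale2 {N H c κ M : ℝ} (hN0 : 0 ≤ N) (hκ : 0 ≤ κ) (h1 : c ≤ κ * H) (h2 : N * H ≤ M) : N * c ≤ κ * M := by
  calc N * c ≤ N * (κ * H) := mul_le_mul_of_nonneg_left h1 hN0
    _ = κ * (N * H) := by ring
    _ ≤ κ * M := mul_le_mul_of_nonneg_left h2 hκ

set_option maxHeartbeats 1000000 in
theorem main_contra (a : ℕ) (ha : 1 ≤ a) (ω ω' α κ C : ℝ) (hs : ω + ω' = a) (hp : ω * ω' = -1)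
    (f : Polynomial ℤ) (hα : Polynomial.aeval α f = 0) (hδ : 1 ≤ f.natDegree)
    (hκ : 0 < κ) (hC : 1 ≤ C) (happ : ∀ H : ℝ, ∃ A : App a ω ω' α κ C, H ≤ A.L) : False := by
  obtain ⟨C1, hC1, haux⟩ := aux_poly α f hα hδ
  set ε : ℝ := κ / (2 * (2 + κ)) with hε
  have hε0 : 0 < ε := by positivity
  have hεκ : (2 + κ) * ε = κ / 2 := by rw [hε]; field_simp
  have hε1 : ε < 1 := by nlinarith
  set σ : ℝ := min 1 (κ / (16 + 8 * κ)) with hσ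
  have hσ0 : 0 < σ := lt_min one_pos (by positivity)
  have hσκ : (4 + 2 * κ) * σ ≤ κ / 4 := by
    have : σ ≤ κ / (16 + 8 * κ) := min_le_right _ _
    calc (4 + 2 * κ) * σ ≤ (4 + 2 * κ) * (κ / (16 + 8 * κ)) := by gcongr
      _ = κ / 4 := by field_simp; ring
  obtain ⟨m, hm1, hm2⟩ : ∃ m : ℕ, 1 ≤ m ∧ 2 * (f.natDegree : ℝ) ≤ Real.exp (m * ε ^ 2 / 2) := by
    obtain ⟨m, hm⟩ := exists_nat_gt (2 * (f.natDegree : ℝ) / (ε ^ 2 / 2))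
    refine ⟨m + 1, by omega, ?_⟩
    rw [div_lt_iff₀ (by positivity)] at hm
    have := Real.add_one_le_exp (((m + 1 : ℕ) : ℝ) * ε ^ 2 / 2)
    push_cast at this ⊢
    nlinarith [sq_nonneg ε]
  have hmr : (1 : ℝ) ≤ m := by exact_mod_cast hm1
  obtain ⟨η, hη0, hη1, hroth⟩ := roth_lemma m σ hσ0 (min_le_left _ _)
  set A : ℝ := max 1 |α| with hA
  have hA1 : 1 ≤ A := le_max_left _ _
  set K : ℝ := Real.log (8 * A * C) + C1 with hK
  have hK0 : 0 < K := by
    have : 0 ≤ Real.log (8 * A * C) := Real.log_nonneg (by nlinarith)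
    linarith
  obtain ⟨H0, hH1, hH2, hH3, hH4⟩ : ∃ H0 : ℝ, 1 ≤ H0 ∧ 2 * m ≤ η * H0 ∧ 2 * m * C1 ≤ η * H0 ∧
      64 * m * K ≤ κ * H0 := by
    refine ⟨1 + 2 * m / η + 2 * m * C1 / η + 64 * m * K / κ, ?_, ?_, ?_, ?_⟩
    · have : 0 ≤ 2 * m / η + 2 * m * C1 / η + 64 * m * K / κ := by positivity
      linarith
    · have : 2 * m = η * (2 * m / η) := by field_simp
      rw [this]
      apply mul_le_mul_of_nonneg_left _ hη0.le
      rw [← this]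
      have : 0 ≤ 1 + 2 * m * C1 / η + 64 * m * K / κ := by positivity
      linarith
    · have : 2 * m * C1 = η * (2 * m * C1 / η) := by field_simp
      rw [this]
      apply mul_le_mul_of_nonneg_left _ hη0.le
      rw [← this]
      have : 0 ≤ 1 + 2 * m / η + 64 * m * K / κ := by positivity
      linarith
    · have : 64 * m * K = κ * (64 * m * K / κ) := by field_simp
      rw [this]
      apply mul_le_mul_of_nonneg_left _ hκ.le
      rw [← this]
      have : 0 ≤ 1 + 2 * m / η + 2 * m * C1 / η := by positivity
      linarith
  obtain ⟨Ap, hLH0, hLjk⟩ := build_seq happ m η H0 hη0 hη1 hH1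
  obtain ⟨L, hL⟩ : ∃ L : Fin m → ℝ, L = fun j => (Ap j).L := ⟨_, rfl⟩
  have hLA : ∀ j, (Ap j).L = L j := fun j => by rw [hL]
  simp only [hLA] at hLH0 hLjk
  have hLp : ∀ j, 0 < L j := fun j => by linarith [hLH0 j]
  set E : ℝ := ∑ j, L j with hE
  have hLE : ∀ j, L j ≤ E := fun j => Finset.single_le_sum (fun i _ => (hLp i).le) (Finset.mem_univ j)
  have hE0 : 0 ≤ E := Finset.sum_nonneg fun i _ => (hLp i).le
  set D : ℝ := E + 32 * m * E / κ + 1 with hDd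
  have hDE : E ≤ D := by
    have : 0 ≤ 32 * m * E / κ := by positivity
    linarith
  have hDpos : 0 < D := by
    have : 0 ≤ 32 * m * E / κ := by positivity
    linarith
  have hDE2 : 32 * m * E ≤ κ * D := by
    have : 32 * m * E = κ * (32 * m * E / κ) := by field_simp
    rw [this]
    apply mul_le_mul_of_nonneg_left _ hκ.le
    linarith
  clear_value D
  obtain ⟨d, hdd⟩ : ∃ d : Fin m → ℕ, ∀ j, d j = ⌈D / L j⌉₊ := ⟨_, fun j => rfl⟩
  have hd1 : ∀ j, 1 ≤ d j := fun j => by rw [hdd]; exact Nat.one_le_iff_ne_zero.2 (Nat.ceil_pos.2 (div_pos hDpos (hLp j))).ne'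
  have hdlo : ∀ j, D / L j ≤ d j := fun j => by rw [hdd]; exact Nat.le_ceil _
  have hdhi : ∀ j, (d j : ℝ) ≤ D / L j + 1 := fun j => by rw [hdd]; exact (Nat.ceil_lt_add_one (div_pos hDpos (hLp j)).le).le
  have hdhi2 : ∀ j, (d j : ℝ) ≤ 2 * (D / L j) := by
    intro j
    have : 1 ≤ D / L j := by rw [le_div_iff₀ (hLp j)]; linarith [hLE j]
    linarith [hdhi j]
  have hD1 : ∀ j, D ≤ d j * L j := fun j => (div_le_iff₀ (hLp j)).1 (hdlo j)
  have hD2 : ∀ j, d j * L j ≤ D + E := by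
    intro j
    have h := mul_le_mul_of_nonneg_right (hdhi j) (hLp j).le
    rw [add_mul, div_mul_cancel₀ _ (hLp j).ne'] at h
    linarith [hLE j]
  have hN : (∑ j, (d j : ℝ)) * H0 ≤ 2 * m * D := by
    rw [Finset.sum_mul]
    calc ∑ j, (d j : ℝ) * H0 ≤ ∑ j : Fin m, 2 * D := by
          apply Finset.sum_le_sum
          intro j _
          calc (d j : ℝ) * H0 ≤ 2 * (D / L j) * L j := by
                apply mul_le_mul (hdhi2 j) (hLH0 j) (by linarith)
                have := hLp j
                positivity
            _ = 2 * D := by have := (hLp j).ne'; field_simp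
      _ = 2 * m * D := by simp; ring
  set N : ℝ := ∑ j, (d j : ℝ) with hNd
  have hN0 : 0 ≤ N := Finset.sum_nonneg fun j _ => by positivity
  have hH0pos : 0 < H0 := by linarith
  have hdjk : ∀ j k : Fin m, j < k → (d j : ℝ) ≤ η * d k := by
    intro j k hjk
    refine (hdhi2 j).trans ?_
    refine le_trans ?_ (mul_le_mul_of_nonneg_left (hdlo k) hη0.le)
    have h := hLjk j k hjk
    have hk := hLp k
    have hj := hLp j
    rw [← mul_div_assoc, ← mul_div_assoc, div_le_div_iff₀ hj hk]
    have h' : 2 * L k ≤ η * L j := by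
      have := mul_le_mul_of_nonneg_left h hη0.le
      rw [← mul_assoc, mul_div_cancel₀ _ hη0.ne'] at this
      exact this
    nlinarith
  obtain ⟨P, hP0, hPdeg, hPl, hPidx⟩ := haux ε hε0 hε1 m hm1 hm2 d hd1
  have hm0 : (0 : ℝ) < 2 * m := by linarith
  have hNη : N ≤ η * D := by
    have := scale2 hN0 hη0.le hH2 hN
    exact le_of_mul_le_mul_left (by linarith) hm0
  have hNC : C1 * N ≤ η * D := by
    have := scale2 hN0 hη0.le hH3 hN
    exact le_of_mul_le_mul_left (by linarith) hm0
  obtain ⟨I, hI, hIne⟩ := hroth d (fun j => (((Ap j).p * ω + (Ap j).p') / ((Ap j).q * ω + (Ap j).q'))) L D P hd1 hdjk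
    (fun j => by rw [← hLA]; exact (Ap j).star) hDpos.le hD1 hNη hP0 hPdeg (hPl.trans hNC)
  have hl1pos : 0 < l1 P := by linarith [one_le_l1 hP0]
  have hcore := core hm1 a ha ω ω' α κ C hs hp hκ hC d hd1 P hPdeg Ap (m / 2 * (1 - ε)) σ D E A C1
    (by
      intro i hi
      by_contra hlt
      exact hi (hPidx i (not_le.1 hlt))) I hI hIne hA1 (le_max_right _ _) hDpos.le (by simpa only [hLA] using hD1) (by simpa only [hLA] using hD2)
    (by rw [← Real.log_le_iff_le_exp hl1pos]; exact hPl)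
  rw [← hNd, ← hK] at hcore
  have e1 : 2 * K * N ≤ κ * D / 16 := by
    have := scale2 hN0 hκ.le hH4 hN
    exact le_of_mul_le_mul_left (a := 32 * (m : ℝ)) (by linarith) (by linarith)
  have e2 : (4 + 2 * κ) * D * (m / 2 * (1 - ε) - σ) = D * (m * (2 + κ - (2 + κ) * ε) - (4 + 2 * κ) * σ) := by ring
  rw [e2, hεκ] at hcore
  have e3 : D * ((4 + 2 * κ) * σ) ≤ D * (κ / 4) := mul_le_mul_of_nonneg_left hσκ hDpos.le
  have e4 : 1 * (D * κ) ≤ m * (D * κ) := mul_le_mul_of_nonneg_right hmr (by positivity)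
  have e5 : 0 < D * κ := by positivity
  nlinarith
end RothCF
end

section
namespace RothCF
open Polynomial

lemma om_irr (a : ℕ) (ha : 1 ≤ a) (ω ω' : ℝ) (hs : ω + ω' = a) (hp : ω * ω' = -1) : Irrational ω := by
  rintro ⟨r, hr⟩
  have h1 : ω ^ 2 = a * ω + 1 := by linear_combination ω * hs - hp
  rw [← hr] at h1
  have h2 : r ^ 2 = a * r + 1 := by exact_mod_cast h1
  have hd : (r.den : ℚ) ≠ 0 := by exact_mod_cast r.den_nz
  have h3 : (r.num : ℚ) = r * r.den := (Rat.mul_den_eq_num r).symm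
  have h4 : (r.num : ℚ) ^ 2 + a * r.num * (-(r.den : ℚ)) - (-(r.den : ℚ)) ^ 2 = 0 := by
    rw [h3]; linear_combination (r.den : ℚ) ^ 2 * h2
  have h5 := not_sq a ha r.num (-(r.den : ℤ)) (by exact_mod_cast h4)
  have := r.den_nz
  omega

lemma om_lin {ω : ℝ} (h : Irrational ω) (s t : ℚ) (e : (s : ℝ) * ω + t = 0) : s = 0 ∧ t = 0 := by
  have hs : s = 0 := by
    by_contra hs
    apply h
    refine ⟨-t / s, ?_⟩
    have : (s : ℝ) ≠ 0 := by exact_mod_cast hs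
    push_cast
    field_simp
    linarith
  subst hs
  simp at e
  exact ⟨rfl, e⟩

/-- The integer quadratic polynomial vanishing at the quadratic approximation. -/
noncomputable def qpol (A B C0 : ℤ) : Polynomial ℤ := C A * X ^ 2 + C B * X + C C0

lemma qpol_prim (A B C0 p q : ℤ) (h : p ^ 2 * A + p * q * B + q ^ 2 * C0 = 1) : (qpol A B C0).IsPrimitive := by
  intro r hr
  rw [C_dvd_iff_dvd_coeff] at hr
  have h0 := hr 0
  have h1 := hr 1
  have h2 := hr 2
  have c0 : (qpol A B C0).coeff 0 = C0 := by simp [qpol]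
  have c1 : (qpol A B C0).coeff 1 = B := by simp only [qpol, coeff_add, coeff_C_mul, coeff_X_pow, coeff_X, coeff_C]; norm_num
  have c2 : (qpol A B C0).coeff 2 = A := by simp only [qpol, coeff_add, coeff_C_mul, coeff_X_pow, coeff_X, coeff_C]; norm_num
  rw [c0] at h0
  rw [c1] at h1
  rw [c2] at h2
  apply isUnit_of_dvd_one
  rw [← h]
  exact dvd_add (dvd_add (h2.mul_left _) (h1.mul_left _)) (h0.mul_left _)

lemma qpol_dvd (A B C0 p q : ℤ) (h : p ^ 2 * A + p * q * B + q ^ 2 * C0 = 1) (hA : A ≠ 0) (ξ : ℝ)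
    (hξ : Irrational ξ) (hr : (A : ℝ) * ξ ^ 2 + B * ξ + C0 = 0) (G : Polynomial ℤ) (hG : aeval ξ G = 0) :
    qpol A B C0 ∣ G := by
  have hprim := qpol_prim A B C0 p q h
  set fQ := (qpol A B C0).map (Int.castRingHom ℚ) with hfQ
  set GQ := G.map (Int.castRingHom ℚ) with hGQ
  have hfd : fQ = C (A : ℚ) * X ^ 2 + C (B : ℚ) * X + C (C0 : ℚ) := by
    simp [hfQ, qpol]
  have hAq : (A : ℚ) ≠ 0 := by exact_mod_cast hA
  have hdeg : fQ.degree = 2 := by rw [hfd]; exact degree_quadratic hAq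
  have hf0 : fQ ≠ 0 := by intro h0; rw [h0] at hdeg; simp at hdeg
  have hfdvd : fQ ∣ GQ := by
    rw [← EuclideanDomain.mod_eq_zero]
    set R := GQ % fQ with hR
    have hRd : R.degree < 2 := by rw [← hdeg]; exact degree_mod_lt GQ hf0
    have hRn : R.natDegree ≤ 1 := by
      by_cases hR0 : R = 0
      · rw [hR0]; simp
      · have := (natDegree_lt_iff_degree_lt hR0 (n := 2)).2 hRd
        omega
    obtain ⟨r1, r0, hRe⟩ := exists_eq_X_add_C_of_natDegree_le_one hRn
    have hGξ : aeval ξ GQ = 0 := by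
      rw [hGQ]
      have : aeval ξ (G.map (algebraMap ℤ ℚ)) = aeval ξ G := aeval_map_algebraMap ℚ ξ G
      rw [← hG, ← this]; rfl
    have hfξ : aeval ξ fQ = 0 := by
      rw [hfd]; simpa using hr
    have hRξ : aeval ξ R = 0 := by
      have := EuclideanDomain.div_add_mod GQ fQ
      rw [← this] at hGξ
      simpa [hfξ] using hGξ
    rw [hRe] at hRξ
    have := om_lin hξ r1 r0 (by simpa using hRξ)
    rw [hRe, this.1, this.2]; simp
  exact (IsPrimitive.Int.dvd_iff_map_cast_dvd_map_cast _ _ hprim).2 hfdvd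

lemma lead_ge (A B C0 p q : ℤ) (h : p ^ 2 * A + p * q * B + q ^ 2 * C0 = 1) (hA : A ≠ 0) (ξ ξ' : ℝ)
    (hξ : Irrational ξ) (hne : ξ ≠ ξ') (hB : (B : ℝ) = -A * (ξ + ξ')) (hC : (C0 : ℝ) = A * (ξ * ξ')) (k : ℕ) :
    ∀ G : Polynomial ℤ, G ≠ 0 → (X - C ξ) ^ k ∣ G.map (Int.castRingHom ℝ) → |A| ^ k ≤ |G.leadingCoeff| := by
  have hfac : (qpol A B C0).map (Int.castRingHom ℝ) = (X - C ξ) * (C (A : ℝ) * (X - C ξ')) := by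
    have e : ∀ n : ℤ, (C n : Polynomial ℤ).map (Int.castRingHom ℝ) = C (n : ℝ) := fun n => map_C _
    rw [qpol, Polynomial.map_add, Polynomial.map_add, Polynomial.map_mul, Polynomial.map_mul, Polynomial.map_pow,
      map_X, e, e, e, hB, hC, C_mul, C_mul, C_mul, C_add, C_neg]
    ring
  have hlead : (qpol A B C0).leadingCoeff = A := leadingCoeff_quadratic hA
  induction k with
  | zero =>
    intro G hG _
    rw [pow_zero]
    exact Int.one_le_abs (leadingCoeff_ne_zero.2 hG)
  | succ k ih =>
    intro G hG hdvd
    have hroot : aeval ξ G = 0 := by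
      have h1 : (X - C ξ) ∣ G.map (Int.castRingHom ℝ) := (dvd_pow_self _ (Nat.succ_ne_zero k)).trans hdvd
      rw [dvd_iff_isRoot, IsRoot, eval_map] at h1
      exact h1
    obtain ⟨G1, rfl⟩ := qpol_dvd A B C0 p q h hA ξ hξ (by rw [hB, hC]; ring) G hroot
    have hG1 : G1 ≠ 0 := by rintro rfl; simp at hG
    have hd1 : (X - C ξ) ^ k ∣ G1.map (Int.castRingHom ℝ) := by
      rw [Polynomial.map_mul, hfac, pow_succ', mul_assoc] at hdvd
      have h2 := (mul_dvd_mul_iff_left (X_sub_C_ne_zero ξ)).1 hdvd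
      have hAr : IsUnit (C (A : ℝ)) := by
        rw [isUnit_C, isUnit_iff_ne_zero]; exact_mod_cast hA
      have hr0 : IsCoprime (X - C ξ) (C (A : ℝ)) := by
        obtain ⟨u, hu⟩ := hAr.exists_left_inv
        exact ⟨0, u, by rw [zero_mul, zero_add, hu]⟩
      have hcop : IsCoprime ((X - C ξ) ^ k) (C (A : ℝ) * (X - C ξ')) := by
        apply IsCoprime.pow_left
        apply IsCoprime.mul_right (hr0)
        exact isCoprime_X_sub_C_of_isUnit_sub (by rw [isUnit_iff_ne_zero]; exact sub_ne_zero.2 hne)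
      exact hcop.dvd_of_dvd_mul_left h2
    rw [leadingCoeff_mul, hlead, abs_mul, pow_succ']
    exact mul_le_mul_of_nonneg_left (ih G1 hG1 hd1) (abs_nonneg _)

theorem star_quad (a : ℕ) (ha : 1 ≤ a) (ω ω' : ℝ) (hs : ω + ω' = a) (hp : ω * ω' = -1) (q q' p p' : ℤ)
    (hdet : (p * q' - p' * q) ^ 2 = 1) (L : ℝ) (x0 : q * ω + q' ≠ 0) (x0' : q * ω' + q' ≠ 0)
    (hL : Real.exp L ≤ |(q * ω + q') * (q * ω' + q')|) : Star ((p * ω + p') / (q * ω + q')) L := by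
  have hirr := om_irr a ha ω ω' hs hp
  have hωne : ω ≠ ω' := by
    rintro rfl
    nlinarith [sq_nonneg ω]
  have hdetr : ((p : ℝ) * q' - p' * q) ^ 2 = 1 := by exact_mod_cast hdet
  have hdet0 : ((p : ℝ) * q' - p' * q) ≠ 0 := by
    intro h0; rw [h0] at hdetr; norm_num at hdetr
  set A : ℤ := q' ^ 2 + a * q * q' - q ^ 2 with hA
  set B : ℤ := -(2 * q' * p' + (q * p' + q' * p) * a - 2 * q * p) with hB
  set C0 : ℤ := p' ^ 2 + a * p * p' - p ^ 2 with hC0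
  have hAr : (A : ℝ) = (q * ω + q') * (q * ω' + q') := by
    rw [hA]; push_cast; linear_combination (-(q : ℝ) * q') * hs - (q : ℝ) ^ 2 * hp
  have hid : p ^ 2 * A + p * q * B + q ^ 2 * C0 = 1 := by
    rw [hA, hB, hC0]; linear_combination hdet
  have hA0 : A ≠ 0 := by
    have : (A : ℝ) ≠ 0 := by rw [hAr]; exact mul_ne_zero x0 x0'
    exact_mod_cast this
  set ξ := (p * ω + p') / (q * ω + q') with hξd
  set ξ' := (p * ω' + p') / (q * ω' + q') with hξd'
  have hξ : Irrational ξ := by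
    rintro ⟨r, hr⟩
    rw [hξd, eq_div_iff x0] at hr
    have := om_lin hirr (r * q - p) (r * q' - p') (by push_cast; linear_combination hr)
    have h0 : (p : ℚ) * q' - p' * q = 0 := by linear_combination (q : ℚ) * this.2 - (q' : ℚ) * this.1
    apply hdet0
    exact_mod_cast h0
  have hne : ξ ≠ ξ' := by
    intro he
    rw [hξd, hξd', div_eq_div_iff x0 x0'] at he
    have : ((p : ℝ) * q' - p' * q) * (ω - ω') = 0 := by linear_combination he
    rcases mul_eq_zero.1 this with h | h
    · exact hdet0 h
    · exact hωne (by linarith)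
  have hBr : (B : ℝ) = -A * (ξ + ξ') := by
    rw [hAr, hξd, hξd', hB]
    field_simp
    push_cast
    linear_combination (-((q : ℝ) * p' + q' * p)) * hs * (-1) + (2 * (q : ℝ) * p) * hp
  have hCr : (C0 : ℝ) = A * (ξ * ξ') := by
    rw [hAr, hξd, hξd', hC0]
    field_simp
    push_cast
    linear_combination (-(p : ℝ) * p') * hs - (p : ℝ) ^ 2 * hp
  intro G hG k hk
  have h1 := lead_ge A B C0 p q hid hA0 ξ ξ' hξ hne hBr hCr k G hG hk
  have h2 : |((G.leadingCoeff : ℤ) : ℝ)| ≤ l1u G :=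
    Finset.single_le_sum (f := fun k => |((G.coeff k : ℤ) : ℝ)|) (fun i _ => abs_nonneg _) (natDegree_mem_support_of_nonzero hG)
  have h3 : (|(A : ℝ)|) ^ k ≤ l1u G := le_trans (by exact_mod_cast h1) h2
  rw [hAr] at h3
  have h4 : Real.exp L ^ k ≤ l1u G := le_trans (by gcongr) h3
  rw [← Real.exp_nat_mul] at h4
  have hpos : 0 < l1u G := lt_of_lt_of_le (Real.exp_pos _) h4
  exact (Real.le_log_iff_exp_le hpos).2 h4

end RothCF
end

section
namespace RothCF

section CF
variable (t : ℕ → ℕ)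

lemma den_succ (n : ℕ) : cfDen t (n + 2) = t (n + 2) * cfDen t (n + 1) + cfDen t n := rfl
lemma num_succ (n : ℕ) : cfNum t (n + 2) = t (n + 2) * cfNum t (n + 1) + cfNum t n := rfl

lemma den_pos (ht : ∀ i, 1 ≤ i → 1 ≤ t i) : ∀ n, 1 ≤ cfDen t n ∧ 1 ≤ cfDen t (n + 1) := by
  intro n
  induction n with
  | zero => exact ⟨le_refl 1, ht 1 le_rfl⟩
  | succ n ih =>
    refine ⟨ih.2, ?_⟩
    rw [den_succ]
    exact le_add_left ih.1

lemma den_mono (ht : ∀ i, 1 ≤ i → 1 ≤ t i) (n : ℕ) : cfDen t n ≤ cfDen t (n + 1) := by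
  cases n with
  | zero => exact ht 1 le_rfl
  | succ n =>
    rw [den_succ]
    have := ht (n + 2) (by omega)
    nlinarith

lemma den_ge (ht : ∀ i, 1 ≤ i → 1 ≤ t i) (n : ℕ) : n ≤ cfDen t n := by
  induction n with
  | zero => simp
  | succ n ih =>
    cases n with
    | zero => exact ht 1 le_rfl
    | succ n =>
      rw [den_succ]
      have := ht (n + 2) (by omega)
      have := (den_pos t ht n).1
      nlinarith

lemma den_le (ht : ∀ i, 1 ≤ i → 1 ≤ t i) (M : ℕ) (hM : ∀ i, 1 ≤ i → t i ≤ M) (n : ℕ) : cfDen t n ≤ (M + 1) ^ n := by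
  induction n with
  | zero => exact le_refl 1
  | succ n ih =>
    have h : cfDen t (n + 1) ≤ (M + 1) * cfDen t n := by
      cases n with
      | zero => 
        have := hM 1 le_rfl
        change t 1 ≤ (M + 1) * 1
        omega
      | succ n =>
        rw [den_succ]
        have := hM (n + 2) (by omega)
        have := den_mono t ht n
        nlinarith
    calc cfDen t (n + 1) ≤ (M + 1) * cfDen t n := h
      _ ≤ (M + 1) * (M + 1) ^ n := Nat.mul_le_mul_left _ ih
      _ = _ := by ring

lemma cf_det (n : ℕ) : (cfNum t (n + 1) : ℤ) * cfDen t n - cfNum t n * cfDen t (n + 1) = (-1) ^ n := by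
  induction n with
  | zero => simp [cfNum, cfDen]
  | succ n ih =>
    rw [den_succ, num_succ, pow_succ, ← ih]
    push_cast
    ring

lemma err_sign (ht : ∀ i, 1 ≤ i → 1 ≤ t i) (α : ℝ)
    (hα : Filter.Tendsto (fun n => (cfNum t n : ℝ) / cfDen t n) Filter.atTop (nhds α)) (n : ℕ) :
    0 ≤ (-1) ^ n * (α * cfDen t n - cfNum t n) := by
  have hpos : ∀ n, (0 : ℝ) < cfDen t n := fun n => by exact_mod_cast (den_pos t ht n).1
  have hstep : ∀ k, 0 ≤ (-1 : ℝ) ^ k * ((cfNum t (k + 2) : ℝ) / cfDen t (k + 2) - (cfNum t k : ℝ) / cfDen t k) := by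
    intro k
    have h1 : (cfNum t (k + 1) : ℝ) * cfDen t k - cfNum t k * cfDen t (k + 1) = (-1) ^ k := by
      exact_mod_cast cf_det t k
    have h2 : (cfNum t (k + 2) : ℝ) / cfDen t (k + 2) - (cfNum t k : ℝ) / cfDen t k
        = t (k + 2) * (-1) ^ k / (cfDen t (k + 2) * cfDen t k) := by
      rw [div_sub_div _ _ (hpos _).ne' (hpos _).ne', ← h1, den_succ, num_succ]
      push_cast
      ring
    rw [h2]
    have h3 : (-1 : ℝ) ^ k * (t (k + 2) * (-1) ^ k / (cfDen t (k + 2) * cfDen t k)) =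
        ((-1) ^ k * (-1) ^ k) * (t (k + 2) / (cfDen t (k + 2) * cfDen t k)) := by ring
    rw [h3, ← mul_pow]
    norm_num
    positivity
  have hsgn : ∀ j, (-1 : ℝ) ^ (n + 2 * j) = (-1) ^ n := fun j => by rw [pow_add, pow_mul]; norm_num
  have hmono : Monotone (fun j : ℕ => (-1 : ℝ) ^ n * ((cfNum t (n + 2 * j) : ℝ) / cfDen t (n + 2 * j))) := by
    apply monotone_nat_of_le_succ
    intro j
    have := hstep (n + 2 * j)
    rw [hsgn, mul_sub] at this
    rw [show n + 2 * (j + 1) = n + 2 * j + 2 by ring]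
    linarith
  have hlim : Filter.Tendsto (fun j : ℕ => (-1 : ℝ) ^ n * ((cfNum t (n + 2 * j) : ℝ) / cfDen t (n + 2 * j))) Filter.atTop
      (nhds ((-1 : ℝ) ^ n * α)) := by
    apply Filter.Tendsto.const_mul
    apply hα.comp (f := fun j : ℕ => n + 2 * j)
    exact Filter.tendsto_atTop_mono (fun j => by simp only [id]; omega) Filter.tendsto_id
  have h := hmono.ge_of_tendsto hlim 0
  simp only [mul_zero, add_zero] at h
  have e : (-1 : ℝ) ^ n * (α * cfDen t n - cfNum t n) =
      cfDen t n * ((-1) ^ n * α - (-1) ^ n * ((cfNum t n : ℝ) / cfDen t n)) := by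
    have := (hpos n).ne'
    field_simp
  rw [e]
  exact mul_nonneg (hpos n).le (by linarith)

lemma err_le (ht : ∀ i, 1 ≤ i → 1 ≤ t i) (α : ℝ)
    (hα : Filter.Tendsto (fun n => (cfNum t n : ℝ) / cfDen t n) Filter.atTop (nhds α)) (n : ℕ) :
    |α * cfDen t n - cfNum t n| ≤ 1 / cfDen t (n + 1) := by
  have hpos : ∀ n, (0 : ℝ) < cfDen t n := fun n => by exact_mod_cast (den_pos t ht n).1
  have h0 := err_sign t ht α hα n
  have h1 := err_sign t ht α hα (n + 1)
  have hd : (cfNum t (n + 1) : ℝ) * cfDen t n - cfNum t n * cfDen t (n + 1) = (-1) ^ n := by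
    exact_mod_cast cf_det t n
  have hsq : (-1 : ℝ) ^ n * (-1) ^ n = 1 := by rw [← mul_pow]; norm_num
  have habs : |α * cfDen t n - cfNum t n| = (-1) ^ n * (α * cfDen t n - cfNum t n) := by
    rw [← abs_of_nonneg h0, abs_mul]; simp
  rw [habs, le_div_iff₀ (hpos _)]
  rw [pow_succ] at h1
  have h2 := mul_nonneg h1 (hpos n).le
  have h3 : (-1 : ℝ) ^ n * (α * cfDen t n - cfNum t n) * cfDen t (n + 1) +
    (-1) ^ n * -1 * (α * cfDen t (n + 1) - cfNum t (n + 1)) * cfDen t n = 1 := by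
    linear_combination (-1 : ℝ) ^ n * hd + hsq
  linarith

lemma block_err (a : ℕ) (ω α : ℝ) (hω : ω ^ 2 = a * ω + 1) (S l : ℕ) (hblock : ∀ i, S + 1 < i → i ≤ S + 1 + l → t i = a) :
    ω * (α * cfDen t (S + l + 1) - cfNum t (S + l + 1)) + (α * cfDen t (S + l) - cfNum t (S + l))
      = ω ^ l * (ω * (α * cfDen t (S + 1) - cfNum t (S + 1)) + (α * cfDen t S - cfNum t S)) := by
  induction l with
  | zero => simp
  | succ l ih =>
    have := ih (fun i h1 h2 => hblock i h1 (by omega))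
    have ht : t (S + l + 2) = a := hblock _ (by omega) (by omega)
    rw [pow_succ', mul_assoc, ← this, show S + (l + 1) + 1 = S + l + 2 by ring, show S + (l + 1) = S + l + 1 by ring,
      den_succ, num_succ, ht]
    push_cast
    linear_combination (-(α * cfDen t (S + l + 1) - cfNum t (S + l + 1))) * hω

end CF
end RothCF
end

section
namespace RothCF

set_option maxHeartbeats 1000000 in
lemma mkApp (a b : ℕ) (ha : 1 ≤ a) (hab : a ≠ b) (t : ℕ → ℕ) (ht : ∀ i, 1 ≤ i → 1 ≤ t i)
    (ω ω' α κ c0 : ℝ) (hs : ω + ω' = a) (hp : ω * ω' = -1) (hω : 1 < ω)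
    (hα : Filter.Tendsto (fun n => (cfNum t n : ℝ) / cfDen t n) Filter.atTop (nhds α))
    (hc0 : 0 < c0) (hc1 : c0 ≤ -ω') (hc2 : c0 ≤ 1 + ω')
    (s l : ℕ) (hb : t (s + 2) = b) (hblock : ∀ i, s + 2 < i → i ≤ s + 2 + l → t i = a)
    (hκ : 2 * κ * Real.log (cfDen t (s + 2)) ≤ l * Real.log ω)
    (hbig : (b + 1) / c0 ≤ cfDen t (s + 2)) :
    ∃ A : App a ω ω' α κ (1 + ω), A.L = Real.log (cfDen t (s + 2)) := by
  have hpos : ∀ n, (0 : ℝ) < cfDen t n := fun n => by exact_mod_cast (den_pos t ht n).1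
  have hmono : ∀ n, (cfDen t n : ℝ) ≤ cfDen t (n + 1) := fun n => by exact_mod_cast den_mono t ht n
  have herr := err_le t ht α hα
  have h1 : ω ^ 2 = a * ω + 1 := by linear_combination ω * hs - hp
  have hω'1 : -ω' ≤ 1 := by linarith
  have hQ : (cfDen t (s + 2) : ℝ) = b * cfDen t (s + 1) + cfDen t s := by
    rw [den_succ, hb]; push_cast; ring
  obtain ⟨Q, hQd⟩ : ∃ Q : ℝ, Q = cfDen t (s + 2) := ⟨_, rfl⟩
  obtain ⟨Q1, hQ1d⟩ : ∃ Q1 : ℝ, Q1 = cfDen t (s + 1) := ⟨_, rfl⟩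
  obtain ⟨Q0, hQ0d⟩ : ∃ Q0 : ℝ, Q0 = cfDen t s := ⟨_, rfl⟩
  have pQ : 0 < Q := hQd ▸ hpos _
  have pQ1 : 0 < Q1 := hQ1d ▸ hpos _
  have pQ0 : 0 < Q0 := hQ0d ▸ hpos _
  have m1 : Q1 ≤ Q := by rw [hQd, hQ1d]; exact hmono _
  have m0 : Q0 ≤ Q1 := by rw [hQ1d, hQ0d]; exact hmono _
  rw [← hQd, ← hQ1d, ← hQ0d] at hQ
  have hwx : c0 * Q1 ≤ |ω * (Q * ω' + Q1)| := by
    have e : ω * (Q * ω' + Q1) = ((a : ℝ) - b) * Q1 + (-ω') * Q1 - Q0 := by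
      rw [hQ]; linear_combination (b * Q1 + Q0) * hp + Q1 * hs
    rw [e]
    have k1 := mul_le_mul_of_nonneg_right hc1 pQ1.le
    have k2 := mul_le_mul_of_nonneg_right hc2 pQ1.le
    rcases lt_or_gt_of_ne hab with h | h
    · have h' : (a : ℝ) + 1 ≤ b := by exact_mod_cast h
      have k3 : ((a : ℝ) - b) * Q1 ≤ (-1) * Q1 := mul_le_mul_of_nonneg_right (by linarith) pQ1.le
      rw [abs_of_nonpos (by nlinarith)]
      linarith
    · have h' : (b : ℝ) + 1 ≤ a := by exact_mod_cast h
      have k3 : 1 * Q1 ≤ ((a : ℝ) - b) * Q1 := mul_le_mul_of_nonneg_right (by linarith) pQ1.le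
      rw [abs_of_nonneg (by nlinarith)]
      linarith
  have hXpos : 0 < Q * ω + Q1 := by positivity
  have hX' : Q * ω' + Q1 ≠ 0 := by
    intro h0
    rw [h0, mul_zero, abs_zero] at hwx
    have : 0 < c0 * Q1 := by positivity
    linarith
  rw [← hQd] at hbig hκ ⊢
  have hprod : Q ≤ |(Q * ω + Q1) * (Q * ω' + Q1)| := by
    rw [abs_mul, abs_of_pos hXpos]
    rw [abs_mul, abs_of_pos (by linarith : 0 < ω)] at hwx
    have k1 : Q ≤ (b + 1) * Q1 := by rw [hQ]; linarith
    have k2 : (b + 1 : ℝ) ≤ Q * c0 := (div_le_iff₀ hc0).1 hbig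
    have k3 : Q * ω ≤ Q * ω + Q1 := by linarith
    calc Q ≤ (b + 1) * Q1 := k1
      _ ≤ Q * c0 * Q1 := mul_le_mul_of_nonneg_right k2 pQ1.le
      _ = Q * (c0 * Q1) := by ring
      _ ≤ Q * (ω * |Q * ω' + Q1|) := mul_le_mul_of_nonneg_left hwx pQ.le
      _ = Q * ω * |Q * ω' + Q1| := by ring
      _ ≤ (Q * ω + Q1) * |Q * ω' + Q1| := mul_le_mul_of_nonneg_right k3 (abs_nonneg _)
  have hexp : Real.exp (Real.log Q) = Q := Real.exp_log pQ
  have hexpn : Real.exp (-1 * Real.log Q) = 1 / Q := by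
    rw [neg_one_mul, Real.exp_neg, hexp, one_div]
  have hcast : ∀ n, (((cfDen t n : ℕ) : ℤ) : ℝ) = cfDen t n := fun n => by push_cast; rfl
  have hcastn : ∀ n, (((cfNum t n : ℕ) : ℤ) : ℝ) = cfNum t n := fun n => by push_cast; rfl
  have e1 : |α * Q1 - cfNum t (s + 1)| ≤ 1 / Q := by rw [hQ1d, hQd]; exact herr (s + 1)
  have e2 : |α * Q - cfNum t (s + 2)| ≤ 1 / Q := by
    rw [hQd]
    refine (herr (s + 2)).trans ?_
    exact one_div_le_one_div_of_le (hpos _) (hmono _)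
  refine ⟨⟨cfDen t (s + 2), cfDen t (s + 1), cfNum t (s + 2), cfNum t (s + 1),
    Real.log Q, ?_, ?_, ?_, ?_, ?_, ?_, ?_⟩, rfl⟩
  · rw [hcast, hcast, ← hQd, ← hQ1d]; exact hXpos.ne'
  · rw [hcast, hcast, ← hQd, ← hQ1d]; exact hX'
  · rw [hcast, hcast, ← hQd, ← hQ1d, hexp, abs_of_pos hXpos]; linarith
  · rw [hcast, hcast, ← hQd, ← hQ1d, hexp, abs_le]
    constructor <;> nlinarith
  · rw [hcast, hcast, hcastn, hcastn, ← hQd, ← hQ1d]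
    have hbe := block_err t a ω α h1 (s + 1) l (fun i h h' => hblock i (by omega) (by omega))
    have hG : |ω * (α * cfDen t (s + 1 + l + 1) - cfNum t (s + 1 + l + 1)) + (α * cfDen t (s + 1 + l) - cfNum t (s + 1 + l))|
        ≤ (1 + ω) * (1 / Q) := by
      have hmonoN : Monotone (fun n => (cfDen t n : ℝ)) := monotone_nat_of_le_succ hmono
      have g1 : |α * cfDen t (s + 1 + l + 1) - cfNum t (s + 1 + l + 1)| ≤ 1 / Q := by
        refine (herr _).trans (one_div_le_one_div_of_le pQ ?_)
        rw [hQd]; exact hmonoN (by omega)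
      have g2 : |α * cfDen t (s + 1 + l) - cfNum t (s + 1 + l)| ≤ 1 / Q := by
        refine (herr _).trans (one_div_le_one_div_of_le pQ ?_)
        rw [hQd]; exact hmonoN (by omega)
      refine (abs_add_le _ _).trans ?_
      rw [abs_mul, abs_of_pos (by linarith : 0 < ω)]
      nlinarith
    rw [hbe, abs_mul, abs_of_pos (by positivity : 0 < ω ^ l)] at hG
    have hG2 : |(cfNum t (s + 2) * ω + cfNum t (s + 1)) - α * (Q * ω + Q1)| * ω ^ l ≤ (1 + ω) * (1 / Q) := by
      rw [abs_sub_comm, mul_comm]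
      refine le_trans (le_of_eq ?_) hG
      congr 2
      rw [hQd, hQ1d]; ring
    have hexl : Real.exp (2 * κ * Real.log Q) ≤ ω ^ l := by
      calc Real.exp (2 * κ * Real.log Q) ≤ Real.exp (l * Real.log ω) := Real.exp_le_exp.2 hκ
        _ = ω ^ l := by rw [Real.exp_nat_mul, Real.exp_log (by linarith)]
    have hsplit : Real.exp (-(1 + 2 * κ) * Real.log Q) = (1 / Q) / Real.exp (2 * κ * Real.log Q) := by
      rw [← hexpn, ← Real.exp_sub]; congr 1; ring
    rw [hsplit, ← mul_div_assoc, le_div_iff₀ (Real.exp_pos _)]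
    exact le_trans (mul_le_mul_of_nonneg_left hexl (abs_nonneg _)) hG2
  · rw [hcast, hcast, hcastn, hcastn, ← hQd, ← hQ1d, hexpn]
    have e : (cfNum t (s + 2) * ω' + cfNum t (s + 1)) - α * (Q * ω' + Q1) =
      (-ω') * (α * Q - cfNum t (s + 2)) - (α * Q1 - cfNum t (s + 1)) := by ring
    rw [e]
    refine (abs_sub _ _).trans ?_
    rw [abs_mul, abs_of_pos (by linarith : 0 < -ω')]
    have k0 : 0 < 1 / Q := by positivity
    have k1 : -ω' * |α * Q - cfNum t (s + 2)| ≤ 1 * (1 / Q) := mul_le_mul hω'1 e2 (abs_nonneg _) zero_le_one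
    have k2 : 1 * (1 / Q) ≤ ω * (1 / Q) := mul_le_mul_of_nonneg_right hω.le k0.le
    rw [add_mul]
    linarith
  · apply star_quad a ha ω ω' hs hp
    · have := cf_det t (s + 1)
      rw [show s + 2 = s + 1 + 1 by ring]
      rw [this, ← pow_mul]
      rw [mul_comm, pow_mul]; norm_num
    · rw [hcast, hcast, ← hQd, ← hQ1d]; exact hXpos.ne'
    · rw [hcast, hcast, ← hQd, ← hQ1d]; exact hX'
    · rw [hcast, hcast, ← hQd, ← hQ1d, hexp]; exact hprod

lemma exists_omega (a : ℕ) (ha : 1 ≤ a) : ∃ ω ω' : ℝ, ω + ω' = a ∧ ω * ω' = -1 ∧ 1 < ω := by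
  have h := Real.sq_sqrt (show (0 : ℝ) ≤ (a : ℝ) ^ 2 + 4 by positivity)
  have har : (1 : ℝ) ≤ a := by exact_mod_cast ha
  have hlt : 1 < √((a : ℝ) ^ 2 + 4) := by
    rw [Real.lt_sqrt (by norm_num)]; nlinarith
  refine ⟨(a + √((a : ℝ) ^ 2 + 4)) / 2, (a - √((a : ℝ) ^ 2 + 4)) / 2, by ring, ?_, by linarith⟩
  linear_combination (-1 / 4 : ℝ) * h

lemma growth (lam : ℕ → ℕ) (hlam : ∀ n, 1 ≤ n → 1 ≤ lam n)
    (hliminf : Real.sqrt 2 < Filter.liminf (fun n : ℕ => (lam (n + 1) : ℝ) / lam n) Filter.atTop) :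
    ∃ (N : ℕ) (K : ℝ), 0 < K ∧ ∀ n, N ≤ n → ((∑ k ∈ Finset.Icc 1 n, lam k : ℕ) : ℝ) ≤ K * lam (n + 1) := by
  have h := Filter.eventually_lt_of_lt_liminf hliminf ⟨0, by
    simp only [Filter.eventually_map]
    exact Filter.Eventually.of_forall fun n => by positivity⟩
  obtain ⟨N0, hN0⟩ := Filter.eventually_atTop.1 h
  set N := N0 + 1 with hN
  have hs : (1.4 : ℝ) < √2 := by rw [Real.lt_sqrt (by norm_num)]; norm_num
  have hl : ∀ n, N ≤ n → (1.4 : ℝ) * lam n ≤ lam (n + 1) := by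
    intro n hn
    have h1 := hN0 n (by omega)
    have h2 : (0 : ℝ) < lam n := by exact_mod_cast hlam n (by omega)
    rw [lt_div_iff₀ h2] at h1
    nlinarith
  set K : ℝ := 4 + (∑ k ∈ Finset.Icc 1 N, lam k : ℕ) with hK
  have hK0 : (0 : ℝ) ≤ (∑ k ∈ Finset.Icc 1 N, lam k : ℕ) := by positivity
  have key : ∀ n, N ≤ n → ((∑ k ∈ Finset.Icc 1 n, lam k : ℕ) : ℝ) ≤ K * lam n := by
    intro n hn
    induction n, hn using Nat.le_induction with
    | base =>
      have h2 : (1 : ℝ) ≤ lam N := by exact_mod_cast hlam N (by omega)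
      nlinarith
    | succ n hn ih =>
      rw [Finset.sum_Icc_succ_top (by omega)]
      rw [Nat.cast_add]
      have := hl n hn
      have h4 : 4 ≤ K := by linarith
      have h5 := mul_le_mul_of_nonneg_left this (by linarith : 0 ≤ K)
      have h6 : (0 : ℝ) ≤ lam (n + 1) := by positivity
      nlinarith
  refine ⟨N, K, by linarith, fun n hn => (key n hn).trans ?_⟩
  have := hl n hn
  have h6 : (0 : ℝ) ≤ lam n := by positivity
  apply mul_le_mul_of_nonneg_left _ (by linarith)
  linarith

end RothCF
end

section
namespace RothCF

theorem happ_of (a b : ℕ) (ha : 0 < a) (hb : 0 < b) (hab : a ≠ b)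
    (lam : ℕ → ℕ) (hlam : ∀ n, 1 ≤ n → 1 ≤ lam n) (t : ℕ → ℕ)
    (ht : ∀ n i : ℕ, (∑ k ∈ Finset.Icc 1 n, lam k) < i →
      i ≤ (∑ k ∈ Finset.Icc 1 (n + 1), lam k) → t i = if Even n then a else b)
    (α : ℝ) (hα : Filter.Tendsto (fun n => (cfNum t n : ℝ) / cfDen t n) Filter.atTop (nhds α))
    (hliminf : Real.sqrt 2 < Filter.liminf (fun n : ℕ => (lam (n + 1) : ℝ) / lam n) Filter.atTop)
    (ω ω' : ℝ) (hs : ω + ω' = a) (hp : ω * ω' = -1) (hω : 1 < ω) :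
    ∃ κ : ℝ, 0 < κ ∧ ∀ H : ℝ, ∃ A : App a ω ω' α κ (1 + ω), H ≤ A.L := by
  obtain ⟨N, K, hK, hgr⟩ := growth lam hlam hliminf
  have hsum : ∀ n, ∑ k ∈ Finset.Icc 1 (n + 1), lam k = ∑ k ∈ Finset.Icc 1 n, lam k + lam (n + 1) :=
    fun n => Finset.sum_Icc_succ_top (by omega) _
  obtain ⟨S, hS⟩ : ∃ S : ℕ → ℕ, S = fun n => ∑ k ∈ Finset.Icc 1 n, lam k := ⟨_, rfl⟩
  have hSn : ∀ n, ∑ k ∈ Finset.Icc 1 n, lam k = S n := fun n => by rw [hS]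
  simp only [hSn] at ht hsum hgr
  have hSge : ∀ n, n ≤ S n := by
    intro n
    induction n with
    | zero => omega
    | succ n ih =>
      have := hlam (n + 1) (by omega)
      rw [hsum]; omega
  have hS0 : S 0 = 0 := by rw [hS]; simp
  have htab : ∀ n i, 1 ≤ i → i ≤ S n → t i = a ∨ t i = b := by
    intro n
    induction n with
    | zero => intro i h1 h2; omega
    | succ n ih =>
      intro i h1 h2
      by_cases h3 : i ≤ S n
      · exact ih i h1 h3
      · rw [ht n i (by omega) h2]
        split_ifs
        · exact Or.inl rfl
        · exact Or.inr rfl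
  have htab' : ∀ i, 1 ≤ i → t i = a ∨ t i = b := fun i hi => htab i i hi (hSge i)
  have ht1 : ∀ i, 1 ≤ i → 1 ≤ t i := by
    intro i hi
    rcases htab' i hi with h | h <;> omega
  have htM : ∀ i, 1 ≤ i → t i ≤ a + b := by
    intro i hi
    rcases htab' i hi with h | h <;> omega
  have hden := den_le t ht1 (a + b) htM
  set lM := Real.log ((a + b + 1 : ℕ) : ℝ) with hlM
  have hlM0 : 0 < lM := Real.log_pos (by exact_mod_cast (by omega : 1 < a + b + 1))
  have hlω : 0 < Real.log ω := Real.log_pos hω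
  have hω'0 : ω' < 0 := by nlinarith
  have hω'1 : 0 < 1 + ω' := by
    by_contra h
    nlinarith
  refine ⟨Real.log ω / (2 * K * lM), by positivity, fun H => ?_⟩
  set c0 := min (-ω') (1 + ω') with hc0
  have hc0p : 0 < c0 := lt_min (by linarith) hω'1
  obtain ⟨n0, hn0⟩ := exists_nat_ge (max (Real.exp H) ((b + 1) / c0))
  set n := 2 * (n0 + N + 1) with hn
  have hnS := hSge n
  obtain ⟨s, hs2⟩ : ∃ s, S n = s + 2 := ⟨S n - 2, by omega⟩
  have hqn : (n0 : ℝ) ≤ cfDen t (s + 2) := by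
    have := den_ge t ht1 (s + 2)
    exact_mod_cast (by omega : n0 ≤ cfDen t (s + 2))
  have heven : Even n := ⟨n0 + N + 1, by omega⟩
  have hqpos : (0 : ℝ) < cfDen t (s + 2) := by exact_mod_cast (den_pos t ht1 (s + 2)).1
  have hlogq : Real.log (cfDen t (s + 2)) ≤ (s + 2 : ℕ) * lM := by
    rw [hlM, ← Real.log_pow]
    apply Real.log_le_log hqpos
    exact_mod_cast hden (s + 2)
  obtain ⟨A, hA⟩ := mkApp a b ha hab t ht1 ω ω' α (Real.log ω / (2 * K * lM)) c0 hs hp hω hα hc0p (min_le_left _ _)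
    (min_le_right _ _) s (lam (n + 1))
    (by
      have h := ht (n - 1) (s + 2)
      rw [show n - 1 + 1 = n by omega] at h
      have h2 := hsum (n - 1)
      rw [show n - 1 + 1 = n by omega] at h2
      have h3 := hlam n (by omega)
      rw [h (by omega) (by omega), if_neg]
      rintro ⟨r, hr⟩
      omega)
    (by
      intro i h1 h2
      rw [ht n i (by omega) (by rw [hsum]; omega), if_pos heven])
    (by
      have h1 := hgr n (by omega)
      rw [hs2] at h1
      have h2 : Real.log (cfDen t (s + 2)) ≤ K * lam (n + 1) * lM :=
        hlogq.trans (mul_le_mul_of_nonneg_right h1 hlM0.le)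
      calc 2 * (Real.log ω / (2 * K * lM)) * Real.log (cfDen t (s + 2))
          ≤ 2 * (Real.log ω / (2 * K * lM)) * (K * lam (n + 1) * lM) := by gcongr
        _ = lam (n + 1) * Real.log ω := by field_simp)
    ((le_max_right _ _).trans (hn0.trans hqn))
  refine ⟨A, ?_⟩
  rw [hA, Real.le_log_iff_exp_le hqpos]
  exact (le_max_left _ _).trans (hn0.trans hqn)

theorem main_thm (a b : ℕ) (ha : 0 < a) (hb : 0 < b) (hab : a ≠ b)
    (lam : ℕ → ℕ) (hlam : ∀ n, 1 ≤ n → 1 ≤ lam n) (t : ℕ → ℕ)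
    (ht : ∀ n i : ℕ, (∑ k ∈ Finset.Icc 1 n, lam k) < i →
      i ≤ (∑ k ∈ Finset.Icc 1 (n + 1), lam k) → t i = if Even n then a else b)
    (α : ℝ) (hα : Filter.Tendsto (fun n => (cfNum t n : ℝ) / cfDen t n) Filter.atTop (nhds α))
    (hliminf : Real.sqrt 2 < Filter.liminf (fun n : ℕ => (lam (n + 1) : ℝ) / lam n) Filter.atTop) :
    Transcendental ℚ α := by
  intro halg
  obtain ⟨f, hf0, hf⟩ := (IsFractionRing.isAlgebraic_iff ℤ ℚ ℝ).2 halg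
  have hdeg : 1 ≤ f.natDegree := by
    by_contra h
    have h0 : f.natDegree = 0 := by omega
    rw [Polynomial.eq_C_of_natDegree_eq_zero h0] at hf hf0
    apply hf0
    rw [Polynomial.aeval_C] at hf
    have : f.coeff 0 = 0 := by simpa using hf
    rw [this]; simp
  obtain ⟨ω, ω', hs, hp, hω⟩ := exists_omega a ha
  obtain ⟨κ, hκ, happ⟩ := happ_of a b ha hb hab lam hlam t ht α hα hliminf ω ω' hs hp hω
  exact main_contra a ha ω ω' α κ (1 + ω) hs hp f hf hdeg hκ (by linarith) happ

end RothCF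
end

open Filter Topology

/-- Theorem 4 (improving A. Baker): let `a ≠ b` be positive integers and let the
sequence of partial quotients of `α` consist alternately of `λ₁` copies of `a`, `λ₂`
copies of `b`, `λ₃` copies of `a`, etc. If `liminf λ_{n+1}/λ_n > √2`, then `α` is
transcendental. -/
theorem statement4 (a b : ℕ) (ha : 0 < a) (hb : 0 < b) (hab : a ≠ b)
    (lam : ℕ → ℕ) (hlam : ∀ n, 1 ≤ n → 1 ≤ lam n)
    (t : ℕ → ℕ)
    (ht : ∀ n i : ℕ, (∑ k ∈ Finset.Icc 1 n, lam k) < i →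
      i ≤ (∑ k ∈ Finset.Icc 1 (n + 1), lam k) →
      t i = if Even n then a else b)
    (α : ℝ)
    (hα : Tendsto (fun n => (cfNum t n : ℝ) / cfDen t n) atTop (𝓝 α))
    (hliminf : Real.sqrt 2 < liminf (fun n : ℕ => (lam (n + 1) : ℝ) / lam n) atTop) :
    Transcendental ℚ α := by
  exact RothCF.main_thm a b ha hb hab lam hlam t ht α hα hliminf
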